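/- arXiv:2604.05174 — 7 statements merged into one kernel-verified Lean document; each statement's English description precedes it below -/
import Mathlib

section
/- Let n and k be positive integers with 2k ≤ n. Then the number of words w : Fin n → Fin 5 whose inversion number inv(w) = |{(i,j) : i < j and w(j) < w(i)}| is at most k² is at most (2·k·(n choose k)²)⁴. -/
/-- The inversion number of a word `w : Fin n → A` over a linearly ordered
alphabet `A`: the number of pairs `(i, j)` with `i < j` and `w j < w i`. -/
def invNum {n : ℕ} {A : Type*} [LinearOrder A] (w : Fin n → A) : ℕ :=
  (Finset.univ.filter (fun p : Fin n × Fin n => p.1 < p.2 ∧ w p.2 < w p.1)).card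

/-!
Comparing the letters of a word over `Fin (m + 1)` with each of the `m` thresholds encodes it as `m`
binary words, none with more inversions than the original, so it suffices to bound the number of
binary words. A binary word with `d` ones among the positions its zeros take after sorting has
exactly `d` zeros among the others, hence at least `d ^ 2` inversions; having at most `k ^ 2` of
them forces `d ≤ k`. For fixed `d < k`, choosing the number of zeros and the two sets of misplaced
letters gives at most `(n + 1).choose (2 * d + 1)` words by the dual Vandermonde identity. This
bound would be too weak for `d = k`, but then there are no inversions besides the `k ^ 2` forced
ones, and the word is determined by its number of zeros.
-/

open Finset

section Binomial

lemma choose_add_le_choose_mul_choose (n i j : ℕ) :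
    n.choose (i + j) ≤ n.choose i * n.choose j :=
  calc
    n.choose (i + j) ≤ n.choose (i + j) * (i + j).choose i :=
      Nat.le_mul_of_pos_right _ (Nat.choose_pos (Nat.le_add_right i j))
    _ = n.choose i * (n - i).choose j := by
      rw [Nat.choose_mul (Nat.le_add_right i j), Nat.add_sub_cancel_left]
    _ ≤ n.choose i * n.choose j := by
      gcongr
      exact Nat.sub_le n i

lemma monotoneOn_choose_Iic_half (n : ℕ) : MonotoneOn n.choose (Set.Iic (n / 2)) :=
  monotoneOn_of_le_add_one Set.ordConnected_Iic fun _ _ _ h ↦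
    Nat.choose_le_succ_of_lt_half_left h

lemma sum_antidiagonal_choose_mul_choose (n p q : ℕ) :
    ∑ x ∈ antidiagonal n, x.1.choose p * x.2.choose q = (n + 1).choose (p + q + 1) := by
  induction n generalizing p q with
  | zero =>
    rcases p with _ | p <;> rcases q with _ | q <;> simp [Nat.choose_eq_zero_of_lt]
  | succ n ih =>
    rw [Nat.sum_antidiagonal_succ']
    cases q with
    | zero =>
      have h := ih p 0
      simp only [Nat.choose_zero_right, mul_one, add_zero] at h ⊢
      rw [h, Nat.choose_succ_succ' (n + 1) p, add_comm]
    | succ q =>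
      simp only [Nat.choose_zero_succ, Nat.choose_succ_succ' _ q, mul_add, sum_add_distrib, ih]
      rw [Nat.choose_succ_succ' (n + 1)]
      ring_nf

lemma choose_two_mul_add_one_le {n k d : ℕ} (hkn : 2 * k ≤ n) (hdk : d < k) :
    (n + 1).choose (2 * d + 1) ≤ 2 * n.choose k ^ 2 := by
  have choose_le : ∀ i ≤ k, n.choose i ≤ n.choose k := fun i hi ↦
    monotoneOn_choose_Iic_half n (by grind) (by grind) hi
  calc
    (n + 1).choose (2 * d + 1) = n.choose (d + d) + n.choose (d + (d + 1)) := by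
      rw [Nat.choose_succ_succ', two_mul, add_assoc]
    _ ≤ n.choose d * n.choose d + n.choose d * n.choose (d + 1) :=
      add_le_add (choose_add_le_choose_mul_choose ..) (choose_add_le_choose_mul_choose ..)
    _ ≤ n.choose k * n.choose k + n.choose k * n.choose k := by
      gcongr <;> exact choose_le _ (by omega)
    _ = 2 * n.choose k ^ 2 := by ring

lemma sum_choose_add_le {n k : ℕ} (hk : 0 < k) (hkn : 2 * k ≤ n) :
    ∑ d ∈ range k, (n + 1).choose (2 * d + 1) + (n + 1) ≤ 2 * k * n.choose k ^ 2 := by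
  obtain ⟨k, rfl⟩ := Nat.exists_eq_succ_of_ne_zero hk.ne'
  have n_le_choose : n ≤ n.choose (k + 1) := by
    simpa using
      monotoneOn_choose_Iic_half n (a := 1) (b := k + 1) (by grind) (by grind) (by grind)
  have n_add_one_le_sq : n + 1 ≤ n.choose (k + 1) ^ 2 := by nlinarith
  calc
    _ = ∑ d ∈ range k, (n + 1).choose (2 * (d + 1) + 1) + 2 * (n + 1) := by
      simp [sum_range_succ', two_mul, add_assoc]
    _ ≤ ∑ d ∈ range k, 2 * n.choose (k + 1) ^ 2 + 2 * n.choose (k + 1) ^ 2 := by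
      gcongr with d hd
      exact choose_two_mul_add_one_le hkn (by grind)
    _ = 2 * (k + 1) * n.choose (k + 1) ^ 2 := by
      rw [sum_const, card_range, smul_eq_mul]
      ring

end Binomial

section MonotoneBool

variable {α : Type*} [LinearOrder α] {s : Finset α} {f g : α → Bool}

lemma filter_eq_subset_or_subset_of_monotoneOn (hf : MonotoneOn f s) (hg : MonotoneOn g s)
    (b : Bool) :
    {i ∈ s | f i = b} ⊆ {i ∈ s | g i = b} ∨ {i ∈ s | g i = b} ⊆ {i ∈ s | f i = b} := by
  by_contra! h
  simp only [not_subset, mem_filter, not_and] at h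
  obtain ⟨⟨i, ⟨hi, hfi⟩, hgi⟩, j, ⟨hj, hgj⟩, hfj⟩ := h
  rcases le_total i j with hij | hji
  · have := hf hi hj hij
    have := hg hi hj hij
    cases b <;> grind
  · have := hf hj hi hji
    have := hg hj hi hji
    cases b <;> grind

lemma eqOn_of_monotoneOn_of_card_filter_eq (hf : MonotoneOn f s) (hg : MonotoneOn g s) (b : Bool)
    (hcard : #{i ∈ s | f i = b} = #{i ∈ s | g i = b}) : Set.EqOn f g s := by
  have heq : {i ∈ s | f i = b} = {i ∈ s | g i = b} :=
    (filter_eq_subset_or_subset_of_monotoneOn hf hg b).elim (eq_of_subset_of_card_le · hcard.ge)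
      fun h ↦ (eq_of_subset_of_card_le h hcard.le).symm
  intro i hi
  have hi_iff : f i = b ↔ g i = b := filter_inj'.1 heq hi
  cases b <;> grind

end MonotoneBool

section BinaryWords

variable {n : ℕ}

/-- The pairs of positions counted by `invNum`. -/
def inversions {A : Type*} [LinearOrder A] (w : Fin n → A) : Finset (Fin n × Fin n) :=
  {p | p.1 < p.2 ∧ w p.2 < w p.1}

/-- The positions of the letter `0` in a binary word, with `false` as `0` and `true` as `1`. -/
def zeroPositions (w : Fin n → Bool) : Finset (Fin n) :=
  {i | w i = false}

/-- The positions taken by the letter `0` once the word is sorted. -/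
def sortedZeroPositions (w : Fin n → Bool) : Finset (Fin n) :=
  {i | (i : ℕ) < #(zeroPositions w)}

/-- The positions of the ones that sorting the word replaces by zeros. -/
def misplacedOnes (w : Fin n → Bool) : Finset (Fin n) :=
  sortedZeroPositions w \ zeroPositions w

/-- The positions of the zeros that sorting the word replaces by ones. -/
def misplacedZeros (w : Fin n → Bool) : Finset (Fin n) :=
  zeroPositions w \ sortedZeroPositions w

lemma mem_zeroPositions {w : Fin n → Bool} {i : Fin n} : i ∈ zeroPositions w ↔ w i = false :=
  mem_filter_univ i

lemma mem_sortedZeroPositions {w : Fin n → Bool} {i : Fin n} :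
    i ∈ sortedZeroPositions w ↔ (i : ℕ) < #(zeroPositions w) :=
  mem_filter_univ i

lemma mem_misplacedOnes {w : Fin n → Bool} {i : Fin n} :
    i ∈ misplacedOnes w ↔ (i : ℕ) < #(zeroPositions w) ∧ w i = true := by
  simp [misplacedOnes, mem_sortedZeroPositions, mem_zeroPositions]

lemma mem_misplacedZeros {w : Fin n → Bool} {i : Fin n} :
    i ∈ misplacedZeros w ↔ w i = false ∧ #(zeroPositions w) ≤ i := by
  simp [misplacedZeros, mem_sortedZeroPositions, mem_zeroPositions]

lemma card_zeroPositions_le (w : Fin n → Bool) : #(zeroPositions w) ≤ n :=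
  card_finset_fin_le _

lemma card_misplacedZeros (w : Fin n → Bool) : #(misplacedZeros w) = #(misplacedOnes w) := by
  refine card_sdiff_comm ?_
  rw [sortedZeroPositions, Fin.card_filter_val_lt, min_eq_right (card_zeroPositions_le w)]

lemma eq_of_misplaced_eq {v w : Fin n → Bool} (hzeros : #(zeroPositions v) = #(zeroPositions w))
    (hones : misplacedOnes v = misplacedOnes w)
    (hmisplacedZeros : misplacedZeros v = misplacedZeros w) : v = w := by
  funext i
  have hi_ones : i ∈ misplacedOnes v ↔ i ∈ misplacedOnes w := by rw [hones]
  have hi_zeros : i ∈ misplacedZeros v ↔ i ∈ misplacedZeros w := by rw [hmisplacedZeros]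
  simp only [mem_misplacedOnes, mem_misplacedZeros, hzeros] at hi_ones hi_zeros
  grind

lemma misplacedOnes_product_misplacedZeros_subset (w : Fin n → Bool) :
    misplacedOnes w ×ˢ misplacedZeros w ⊆ inversions w := by
  rintro ⟨i, j⟩ hij
  obtain ⟨⟨hi, hwi⟩, hwj, hj⟩ := by
    simpa only [mem_product, mem_misplacedOnes, mem_misplacedZeros] using hij
  exact mem_filter.2 ⟨mem_univ _, Fin.lt_def.2 (hi.trans_le hj), by simp [hwi, hwj]⟩

lemma card_misplacedOnes_product_misplacedZeros (w : Fin n → Bool) :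
    #(misplacedOnes w ×ˢ misplacedZeros w) = #(misplacedOnes w) ^ 2 := by
  rw [card_product, card_misplacedZeros, sq]

lemma sq_card_misplacedOnes_le_invNum (w : Fin n → Bool) : #(misplacedOnes w) ^ 2 ≤ invNum w := by
  rw [← card_misplacedOnes_product_misplacedZeros]
  exact card_le_card (misplacedOnes_product_misplacedZeros_subset w)

lemma card_filter_zeroPositions_misplacedOnes_le (m d : ℕ) :
    #{w : Fin n → Bool | #(zeroPositions w) = m ∧ #(misplacedOnes w) = d} ≤
      m.choose d * (n - m).choose d := by
  let initial : Finset (Fin n) := {i | (i : ℕ) < m}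
  have card_initial : #initial = min n m := Fin.card_filter_val_lt
  calc
    _ ≤ #(powersetCard d initial ×ˢ powersetCard d initialᶜ) := by
      refine card_le_card_of_injOn (fun w ↦ (misplacedOnes w, misplacedZeros w)) ?_ ?_
      · intro w hw
        obtain ⟨rfl, hd⟩ := (mem_filter_univ w).1 hw
        exact mem_product.2 ⟨mem_powersetCard.2 ⟨sdiff_subset, hd⟩,
          mem_powersetCard.2 ⟨fun i hi ↦ mem_compl.2 (mem_sdiff.1 hi).2,
            (card_misplacedZeros w).trans hd⟩⟩
      · intro v hv w hw hvw
        obtain ⟨hvm, -⟩ := (mem_filter_univ v).1 hv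
        obtain ⟨hwm, -⟩ := (mem_filter_univ w).1 hw
        obtain ⟨hones, hzeros⟩ := Prod.mk.inj hvw
        exact eq_of_misplaced_eq (hvm.trans hwm.symm) hones hzeros
    _ = (min n m).choose d * (n - m).choose d := by
      rw [card_product, card_powersetCard, card_powersetCard, card_compl, card_initial,
        Fintype.card_fin, tsub_min]
    _ ≤ m.choose d * (n - m).choose d := by
      gcongr
      exact min_le_right n m

lemma card_filter_card_misplacedOnes_eq_le (d : ℕ) :
    #{w : Fin n → Bool | #(misplacedOnes w) = d} ≤ (n + 1).choose (2 * d + 1) :=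
  calc
    _ = ∑ m ∈ range (n + 1),
          #{w : Fin n → Bool | #(zeroPositions w) = m ∧ #(misplacedOnes w) = d} := by
      rw [card_eq_sum_card_fiberwise (f := fun w ↦ #(zeroPositions w)) (t := range (n + 1))
        fun w _ ↦ by simpa [Nat.lt_succ_iff] using card_zeroPositions_le w]
      simp only [filter_filter, and_comm]
    _ ≤ ∑ m ∈ range (n + 1), m.choose d * (n - m).choose d :=
      sum_le_sum fun m _ ↦ card_filter_zeroPositions_misplacedOnes_le m d
    _ = (n + 1).choose (2 * d + 1) := by
      rw [two_mul, ← sum_antidiagonal_choose_mul_choose,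
        Nat.sum_antidiagonal_eq_sum_range_succ fun i j ↦ i.choose d * j.choose d]

section Extremal

variable {w : Fin n → Bool}

lemma mem_misplaced_of_invNum_le (hw : invNum w ≤ #(misplacedOnes w) ^ 2) {i j : Fin n}
    (hij : i < j) (hwij : w j < w i) : i ∈ misplacedOnes w ∧ j ∈ misplacedZeros w := by
  have heq : misplacedOnes w ×ˢ misplacedZeros w = inversions w :=
    eq_of_subset_of_card_le (misplacedOnes_product_misplacedZeros_subset w)
      (hw.trans_eq (card_misplacedOnes_product_misplacedZeros w).symm)
  have hmem : (i, j) ∈ inversions w := mem_filter.2 ⟨mem_univ _, hij, hwij⟩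
  rwa [← heq, mem_product] at hmem

lemma monotoneOn_sortedZeroPositions (hw : invNum w ≤ #(misplacedOnes w) ^ 2) :
    MonotoneOn w (sortedZeroPositions w) := by
  intro i _ j hj hij
  by_contra! hwij
  have hlt : i < j := hij.lt_of_ne (by grind)
  exact (mem_sdiff.1 (mem_misplaced_of_invNum_le hw hlt hwij).2).2 hj

lemma monotoneOn_compl_sortedZeroPositions (hw : invNum w ≤ #(misplacedOnes w) ^ 2) :
    MonotoneOn w ((sortedZeroPositions w)ᶜ : Finset (Fin n)) := by
  intro i hi j _ hij
  by_contra! hwij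
  have hlt : i < j := hij.lt_of_ne (by grind)
  exact mem_compl.1 hi (mem_sdiff.1 (mem_misplaced_of_invNum_le hw hlt hwij).1).1

end Extremal

lemma filter_sortedZeroPositions_eq_true (w : Fin n → Bool) :
    {i ∈ sortedZeroPositions w | w i = true} = misplacedOnes w := by
  ext i
  simp [misplacedOnes, mem_zeroPositions]

lemma filter_compl_sortedZeroPositions_eq_false (w : Fin n → Bool) :
    {i ∈ (sortedZeroPositions w)ᶜ | w i = false} = misplacedZeros w := by
  ext i
  simp [misplacedZeros, mem_zeroPositions, and_comm]

lemma eq_of_invNum_le {v w : Fin n → Bool} (hv : invNum v ≤ #(misplacedOnes v) ^ 2)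
    (hw : invNum w ≤ #(misplacedOnes w) ^ 2) (hzeros : #(zeroPositions v) = #(zeroPositions w))
    (hones : #(misplacedOnes v) = #(misplacedOnes w)) : v = w := by
  have hsorted : sortedZeroPositions v = sortedZeroPositions w := by
    simp only [sortedZeroPositions, hzeros]
  have hinit : Set.EqOn v w (sortedZeroPositions w) := by
    refine eqOn_of_monotoneOn_of_card_filter_eq (hsorted ▸ monotoneOn_sortedZeroPositions hv)
      (monotoneOn_sortedZeroPositions hw) true ?_
    rw [filter_sortedZeroPositions_eq_true, ← hsorted, filter_sortedZeroPositions_eq_true, hones]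
  have hfinal : Set.EqOn v w ((sortedZeroPositions w)ᶜ : Finset (Fin n)) := by
    refine eqOn_of_monotoneOn_of_card_filter_eq (hsorted ▸ monotoneOn_compl_sortedZeroPositions hv)
      (monotoneOn_compl_sortedZeroPositions hw) false ?_
    rw [filter_compl_sortedZeroPositions_eq_false, ← hsorted,
      filter_compl_sortedZeroPositions_eq_false, card_misplacedZeros, card_misplacedZeros, hones]
  ext1 i
  by_cases hi : i ∈ sortedZeroPositions w
  · exact hinit hi
  · exact hfinal (mem_compl.2 hi)

lemma card_filter_card_misplacedOnes_eq_invNum_le (d : ℕ) :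
    #{w : Fin n → Bool | #(misplacedOnes w) = d ∧ invNum w ≤ d ^ 2} ≤ n + 1 := by
  rw [← card_range (n + 1)]
  refine card_le_card_of_injOn (fun w ↦ #(zeroPositions w))
    (fun w _ ↦ by simpa [Nat.lt_succ_iff] using card_zeroPositions_le w) ?_
  intro v hv w hw hzeros
  obtain ⟨hvd, hv⟩ := (mem_filter_univ v).1 hv
  obtain ⟨hwd, hw⟩ := (mem_filter_univ w).1 hw
  exact eq_of_invNum_le (by rwa [hvd]) (by rwa [hwd]) hzeros (hvd.trans hwd.symm)

theorem card_binary_words_invNum_le {k : ℕ} (hk : 0 < k) (hkn : 2 * k ≤ n) :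
    #{w : Fin n → Bool | invNum w ≤ k ^ 2} ≤ 2 * k * n.choose k ^ 2 := by
  have hcover : ({w | invNum w ≤ k ^ 2} : Finset (Fin n → Bool)) ⊆
      (range k).biUnion (fun d ↦ ({w | #(misplacedOnes w) = d} : Finset (Fin n → Bool))) ∪
        ({w | #(misplacedOnes w) = k ∧ invNum w ≤ k ^ 2} : Finset (Fin n → Bool)) := by
    intro w hw
    have hw : invNum w ≤ k ^ 2 := (mem_filter_univ w).1 hw
    have hle : #(misplacedOnes w) ≤ k :=
      (Nat.pow_le_pow_iff_left two_ne_zero).1 ((sq_card_misplacedOnes_le_invNum w).trans hw)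
    simpa [hw] using hle.lt_or_eq
  calc
    _ ≤ #((range k).biUnion fun d ↦ {w : Fin n → Bool | #(misplacedOnes w) = d}) +
          #{w : Fin n → Bool | #(misplacedOnes w) = k ∧ invNum w ≤ k ^ 2} :=
      (card_le_card hcover).trans (card_union_le _ _)
    _ ≤ ∑ d ∈ range k, (n + 1).choose (2 * d + 1) + (n + 1) :=
      add_le_add
        (card_biUnion_le.trans (sum_le_sum fun d _ ↦ card_filter_card_misplacedOnes_eq_le d))
        (card_filter_card_misplacedOnes_eq_invNum_le k)
    _ ≤ 2 * k * n.choose k ^ 2 := sum_choose_add_le hk hkn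

end BinaryWords

section Thresholds

lemma invNum_comp_le {n : ℕ} {A B : Type*} [LinearOrder A] [LinearOrder B] {f : A → B}
    (hf : Monotone f) (w : Fin n → A) : invNum (f ∘ w) ≤ invNum w :=
  card_le_card fun _ hp ↦ by
    simp only [mem_filter_univ] at hp ⊢
    exact ⟨hp.1, hf.reflect_lt hp.2⟩

/-- The comparison of the letter `a` with the threshold between `t` and `t + 1`. Applied to all
letters of a word, it gives one of the `m` binary words encoding it. -/
def exceeds {m : ℕ} (t : Fin m) (a : Fin (m + 1)) : Bool :=
  t.castSucc < a

lemma monotone_exceeds {m : ℕ} (t : Fin m) : Monotone (exceeds t) := by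
  intro a b hab
  simpa [exceeds, Bool.le_iff_imp] using hab.trans_lt'

lemma eq_of_forall_exceeds_eq {m : ℕ} {a b : Fin (m + 1)} (h : ∀ t, exceeds t a = exceeds t b) :
    a = b := by
  wlog hab : a ≤ b generalizing a b
  · exact (this (fun t ↦ (h t).symm) (le_of_not_ge hab)).symm
  by_contra hne
  have hlt : a < b := hab.lt_of_ne hne
  simpa [exceeds, hlt] using h (a.castPred (Fin.ne_last_of_lt hlt))

lemma card_words_invNum_le_pow (n m r : ℕ) :
    #{w : Fin n → Fin (m + 1) | invNum w ≤ r} ≤ #{w : Fin n → Bool | invNum w ≤ r} ^ m := by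
  rw [← Fintype.card_piFinset_const]
  refine card_le_card_of_injOn (fun w t ↦ exceeds t ∘ w) ?_ ?_
  · intro w hw
    simp only [mem_coe, Fintype.mem_piFinset, mem_filter_univ] at hw ⊢
    exact fun t ↦ (invNum_comp_le (monotone_exceeds t) w).trans hw
  · intro v _ w _ hvw
    funext i
    exact eq_of_forall_exceeds_eq fun t ↦ congrFun (congrFun hvw t) i

end Thresholds

theorem count_low_inversion_words_five_letters_general (n k m : ℕ) (hk : 0 < k)
    (hkn : 2 * k ≤ n) :
    #{w : Fin n → Fin (m + 1) | invNum w ≤ k ^ 2} ≤ (2 * k * n.choose k ^ 2) ^ m :=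
  (card_words_invNum_le_pow n m (k ^ 2)).trans
    (Nat.pow_le_pow_left (card_binary_words_invNum_le hk hkn) m)

theorem count_low_inversion_words_five_letters (n k : ℕ) (hn : 0 < n) (hk : 0 < k)
    (hkn : 2 * k ≤ n) :
    (Finset.univ.filter (fun w : Fin n → Fin 5 => invNum w ≤ k ^ 2)).card ≤
      (2 * k * (n.choose k) ^ 2) ^ 4 :=
  count_low_inversion_words_five_letters_general n k 4 hk hkn
end

section
/- For all real numbers T ≥ 0 and δ ≥ 0, consider the points of the hyperbolic upper half-plane ℍ given by b = i, c = e^δ·i, a = −tanh(T) + i·(cosh T)⁻¹, and d = e^δ·(−tanh(T) + i·(cosh T)⁻¹). Then dist(a,b) = T, dist(b,c) = δ, dist(c,d) = T, and cosh(dist(a,d)) = cosh(T)²·(cosh(δ) − 1) + 1, where dist denotes the hyperbolic distance on ℍ. -/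
open UpperHalfPlane

/-- The point `b = i` of the upper half-plane. -/
noncomputable def ptB : UpperHalfPlane :=
  ⟨Complex.I, by simp⟩

/-- The point `c = e^δ · i` of the upper half-plane. -/
noncomputable def ptC (δ : ℝ) : UpperHalfPlane :=
  ⟨Complex.ofReal (Real.exp δ) * Complex.I, by
    simp only [Complex.mul_im, Complex.ofReal_re, Complex.ofReal_im, Complex.I_im,
      Complex.I_re, mul_one, mul_zero, add_zero]
    exact Real.exp_pos δ⟩

/-- The point `a = -tanh T + i·(cosh T)⁻¹` of the upper half-plane. -/
noncomputable def ptA (T : ℝ) : UpperHalfPlane :=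
  ⟨-Complex.ofReal (Real.tanh T) + Complex.I * Complex.ofReal (Real.cosh T)⁻¹, by
    simp only [Complex.add_im, Complex.neg_im, Complex.ofReal_im, Complex.mul_im,
      Complex.I_re, Complex.I_im, Complex.ofReal_re, neg_zero, zero_mul, one_mul,
      zero_add]
    exact inv_pos.2 (Real.cosh_pos T)⟩

/-- The point `d = e^δ · (-tanh T + i·(cosh T)⁻¹)` of the upper half-plane. -/
noncomputable def ptD (T δ : ℝ) : UpperHalfPlane :=
  ⟨Complex.ofReal (Real.exp δ) *
      (-Complex.ofReal (Real.tanh T) + Complex.I * Complex.ofReal (Real.cosh T)⁻¹), by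
    simp only [Complex.mul_im, Complex.ofReal_re, Complex.ofReal_im, Complex.add_im,
      Complex.add_re, Complex.neg_im, Complex.neg_re, Complex.I_re, Complex.I_im,
      Complex.mul_im, Complex.mul_re, neg_zero, zero_mul, one_mul, mul_zero,
      zero_add, add_zero, zero_sub, sub_zero]
    have h1 : (0:ℝ) < Real.exp δ := Real.exp_pos δ
    have h2 : (0:ℝ) < (Real.cosh T)⁻¹ := inv_pos.2 (Real.cosh_pos T)
    positivity⟩

theorem dist_eq_abs_of_cosh_dist_eq_cosh {X : Type*} [PseudoMetricSpace X] {x y : X} {r : ℝ}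
    (h : Real.cosh (dist x y) = Real.cosh r) : dist x y = |r| :=
  Real.cosh_injOn dist_nonneg (abs_nonneg r) (h.trans (Real.cosh_abs r).symm)

/-- The point with Fermi coordinates `(s, t)` based on the geodesic `s ↦ e^s * i`: go `s` along the
geodesic from `i`, then `t` along the perpendicular, with `t > 0` on the side of negative real
part. In these coordinates the vertices of the 4-gon are `(0, T)`, `(0, 0)`, `(δ, 0)`, `(δ, T)`. -/
noncomputable def fermiPoint (s t : ℝ) : ℍ :=
  ⟨⟨-(Real.exp s * Real.tanh t), Real.exp s / Real.cosh t⟩,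
    div_pos (Real.exp_pos s) (Real.cosh_pos t)⟩

theorem fermiPoint_re (s t : ℝ) : (fermiPoint s t).re = -(Real.exp s * Real.tanh t) :=
  rfl

theorem fermiPoint_im (s t : ℝ) : (fermiPoint s t).im = Real.exp s / Real.cosh t :=
  rfl

theorem cosh_dist_fermiPoint (s t s' t' : ℝ) :
    Real.cosh (dist (fermiPoint s t) (fermiPoint s' t')) =
      Real.cosh t * Real.cosh t' * Real.cosh (s - s') - Real.sinh t * Real.sinh t' := by
  rw [cosh_dist', Real.cosh_eq (s - s'), neg_sub, Real.exp_sub, Real.exp_sub]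
  simp only [fermiPoint_re, fermiPoint_im, Real.tanh_eq_sinh_div_cosh]
  field_simp
  linear_combination -(Real.exp s * Real.cosh t') ^ 2 * Real.cosh_sq t -
    (Real.exp s' * Real.cosh t) ^ 2 * Real.cosh_sq t'

theorem dist_fermiPoint_same_foot (s t t' : ℝ) :
    dist (fermiPoint s t) (fermiPoint s t') = |t - t'| :=
  dist_eq_abs_of_cosh_dist_eq_cosh <| by
    rw [cosh_dist_fermiPoint, sub_self, Real.cosh_zero, mul_one, Real.cosh_sub]

theorem dist_fermiPoint_zero_zero (s s' : ℝ) :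
    dist (fermiPoint s 0) (fermiPoint s' 0) = |s - s'| :=
  dist_eq_abs_of_cosh_dist_eq_cosh <| by
    simp only [cosh_dist_fermiPoint, Real.cosh_zero, Real.sinh_zero, one_mul, mul_zero, sub_zero]

theorem cosh_dist_fermiPoint_same_height (s s' t : ℝ) :
    Real.cosh (dist (fermiPoint s t) (fermiPoint s' t)) =
      Real.cosh t ^ 2 * (Real.cosh (s - s') - 1) + 1 := by
  rw [cosh_dist_fermiPoint]
  linear_combination Real.cosh_sq t

theorem ptA_eq_fermiPoint (T : ℝ) : ptA T = fermiPoint 0 T := by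
  ext
  simp [ptA, fermiPoint, Complex.mk_eq_add_mul_I, mul_comm Complex.I]

theorem ptB_eq_fermiPoint : ptB = fermiPoint 0 0 := by
  ext
  simp [ptB, fermiPoint, Complex.mk_eq_add_mul_I]

theorem ptC_eq_fermiPoint (δ : ℝ) : ptC δ = fermiPoint δ 0 := by
  ext
  simp [ptC, fermiPoint, Complex.mk_eq_add_mul_I]

theorem ptD_eq_fermiPoint (T δ : ℝ) : ptD T δ = fermiPoint δ T := by
  ext
  simp [ptD, fermiPoint, Complex.mk_eq_add_mul_I, mul_add, div_eq_mul_inv, mul_assoc,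
    mul_comm Complex.I]

/-- The hyperbolic 4-gon `a b c d` with right angles at `b` and `c`, sides `ab`, `cd` of
length `T`, and side `bc` of length `δ`, satisfies
`cosh (dist a d) = cosh T ^ 2 * (cosh δ - 1) + 1`. -/
theorem hyperbolic_four_gon_dist (T δ : ℝ) (hT : 0 ≤ T) (hδ : 0 ≤ δ) :
    dist (ptA T) ptB = T ∧ dist ptB (ptC δ) = δ ∧ dist (ptC δ) (ptD T δ) = T ∧
      Real.cosh (dist (ptA T) (ptD T δ)) = Real.cosh T ^ 2 * (Real.cosh δ - 1) + 1 := by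
  rw [ptA_eq_fermiPoint, ptB_eq_fermiPoint, ptC_eq_fermiPoint, ptD_eq_fermiPoint]
  refine ⟨?ab, ?bc, ?cd, ?ad⟩
  case ab => rw [dist_fermiPoint_same_foot, sub_zero, abs_of_nonneg hT]
  case bc => rw [dist_comm, dist_fermiPoint_zero_zero, sub_zero, abs_of_nonneg hδ]
  case cd => rw [dist_comm, dist_fermiPoint_same_foot, sub_zero, abs_of_nonneg hT]
  case ad => rw [dist_comm, cosh_dist_fermiPoint_same_height, sub_zero]
end

section
/- Let M be a compact metric space, φ a continuous flow of ℝ on M (Flow ℝ M), and μ a Borel probability measure on M such that for every t ∈ ℝ the time-t map φ t is measure-preserving for μ, and such that μ is ergodic for the flow: every measurable set s ⊆ M with (φ t)⁻¹(s) = s for all t ∈ ℝ satisfies μ(s) = 0 or μ(s) = 1. For real T > 0 and ε > 0, let B(T,ε) = {v ∈ M : ∃ t ∈ [T, (1+ε)·T], dist(v, φ t v) < ε}. Then for every ε > 0, μ(B(T,ε)) tends to 1 as T → ∞. -/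
open MeasureTheory

open Filter Set TopologicalSpace
open scoped ENNReal Function Topology

/-!
Fix a set `A` of diameter less than `ε` and let `F j` be the set of points of `A` that do not
return within `ε` during the window `[a j, b j]`. Translate `F j` by the flow for the time given by
the midpoint of its window. As the windows grow, the difference of the midpoint of the `j`-th
window and any fixed earlier midpoint eventually lies in the `j`-th window itself, so a common
point of the two translates would yield a point of `F j` that returns to `A` during that window,
which is impossible. Hence one can extract infinitely many pairwise disjoint translates, and since
they have the measures of the sets `F j`, these measures tend to zero. Finally, up to small
measure, the space is covered by finitely many sets of small diameter.
-/

section Measure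

variable {α ι : Type*} [MeasurableSpace α] {μ : Measure α} [IsFiniteMeasure μ] {l : Filter ι}
  {F : ι → Set α}

theorem tendsto_measure_zero_of_eventually_aedisjoint (hF : ∀ i, NullMeasurableSet (F i) μ)
    (hdisj : ∀ i, ∀ᶠ j in l, AEDisjoint μ (F i) (F j)) :
    Tendsto (fun i ↦ μ (F i)) l (𝓝 0) := by
  rw [ENNReal.tendsto_nhds_zero]
  intro δ hδ
  by_contra hlarge
  have : Std.Symm fun i j ↦ AEDisjoint μ (F i) (F j) := ⟨fun _ _ h ↦ h.symm⟩
  obtain ⟨u, hu, hu_disj⟩ := exists_seq_of_forall_finset_exists' (fun i ↦ δ < μ (F i))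
    (fun i j ↦ AEDisjoint μ (F i) (F j)) fun s _ ↦ by
      have hs : ∀ᶠ j in l, ∀ i ∈ s, AEDisjoint μ (F i) (F j) :=
        (eventually_all_finset s).2 fun i _ ↦ hdisj i
      simpa only [not_le] using ((not_eventually.1 hlarge).and_eventually hs).exists
  have hfinite : {n | δ ≤ μ (F (u n))}.Finite :=
    Measure.finite_const_le_meas_of_disjoint_iUnion₀ μ hδ (fun n ↦ hF (u n)) hu_disj
      (measure_ne_top μ _)
  exact infinite_univ (hfinite.subset fun n _ ↦ (hu n).le)

variable {κ : Type*} [Countable κ] {A : κ → Set α}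

theorem tendsto_measure_compl_biUnion_finset (hA : ∀ k, NullMeasurableSet (A k) μ) :
    Tendsto (fun t : Finset κ ↦ μ (⋃ k ∈ t, A k)ᶜ) atTop (𝓝 (μ (⋃ k, A k)ᶜ)) := by
  have hanti : Antitone fun t : Finset κ ↦ (⋃ k ∈ t, A k)ᶜ := fun _ _ hst ↦
    compl_subset_compl.2 (biUnion_subset_biUnion_left hst)
  have hlim := tendsto_measure_iInter_atTop (μ := μ)
    (fun t : Finset κ ↦ (t.nullMeasurableSet_biUnion fun k _ ↦ hA k).compl) hanti
    ⟨∅, measure_ne_top μ _⟩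
  rwa [← compl_iUnion, ← iUnion_eq_iUnion_finset] at hlim

theorem tendsto_measure_zero_of_tendsto_measure_inter (hA : ∀ k, NullMeasurableSet (A k) μ)
    (hcover : μ (⋃ k, A k)ᶜ = 0) (hFA : ∀ k, Tendsto (fun i ↦ μ (F i ∩ A k)) l (𝓝 0)) :
    Tendsto (fun i ↦ μ (F i)) l (𝓝 0) := by
  rw [ENNReal.tendsto_nhds_zero]
  intro δ hδ
  have hδ2 : 0 < δ / 2 := ENNReal.half_pos hδ.ne'
  obtain ⟨t, ht⟩ : ∃ t : Finset κ, μ (⋃ k ∈ t, A k)ᶜ ≤ δ / 2 :=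
    (ENNReal.tendsto_nhds_zero.1 (hcover ▸ tendsto_measure_compl_biUnion_finset hA)
      (δ / 2) hδ2).exists
  have hsum : Tendsto (fun i ↦ ∑ k ∈ t, μ (F i ∩ A k)) l (𝓝 0) := by
    simpa only [Finset.sum_const_zero] using tendsto_finsetSum t fun k _ ↦ hFA k
  filter_upwards [ENNReal.tendsto_nhds_zero.1 hsum (δ / 2) hδ2] with i hi
  calc
    μ (F i) ≤ μ (F i ∩ ⋃ k ∈ t, A k) + μ (F i \ ⋃ k ∈ t, A k) := measure_le_inter_add_sdiff μ _ _
    _ ≤ ∑ k ∈ t, μ (F i ∩ A k) + μ (⋃ k ∈ t, A k)ᶜ := by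
      rw [inter_iUnion₂]
      gcongr
      · exact measure_biUnion_finset_le t _
      · exact fun _ hx ↦ hx.2
    _ ≤ δ / 2 + δ / 2 := add_le_add hi ht
    _ = δ := ENNReal.add_halves δ

end Measure

/-- The set of points that the flow `φ` brings back within distance `ε` of themselves at some time
of `I`. The set `B(T, ε)` of the paper is `returnSet φ (Set.Icc T ((1 + ε) * T)) ε`. -/
def returnSet {G M : Type*} [AddZero G] [TopologicalSpace G] [PseudoMetricSpace M]
    (φ : Flow G M) (I : Set G) (ε : ℝ) : Set M :=
  {v | ∃ t ∈ I, dist v (φ t v) < ε}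

theorem isOpen_returnSet {G M : Type*} [AddZero G] [TopologicalSpace G] [PseudoMetricSpace M]
    (φ : Flow G M) (I : Set G) (ε : ℝ) : IsOpen (returnSet φ I ε) := by
  have hunion : returnSet φ I ε = ⋃ t ∈ I, {v | dist v (φ t v) < ε} := by
    ext v
    simp only [returnSet, mem_ofPred_eq, mem_iUnion, exists_prop]
  rw [hunion]
  exact isOpen_biUnion fun t _ ↦
    isOpen_lt (continuous_id.dist (φ.continuous_toFun t)) continuous_const

section Recurrence

variable {G M : Type*} [AddGroup G] [TopologicalSpace G] [PseudoMetricSpace M] {φ : Flow G M}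
  {A : Set M} {ε : ℝ}

theorem disjoint_preimage_neg_compl_returnSet_inter (hA : ∀ x ∈ A, ∀ y ∈ A, dist x y < ε)
    {I : Set G} {s t : G} (hst : -s + t ∈ I) :
    Disjoint (φ (-s) ⁻¹' A) (φ (-t) ⁻¹' ((returnSet φ I ε)ᶜ ∩ A)) := by
  rw [disjoint_left]
  rintro v hvs ⟨hv_noreturn, hvt⟩
  have hflow : φ (-s + t) (φ (-t) v) = φ (-s) v := by
    rw [← φ.map_add, add_neg_cancel_right]
  exact hv_noreturn ⟨-s + t, hst, hflow ▸ hA _ hvt _ hvs⟩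

variable [MeasurableSpace M] [OpensMeasurableSpace M] {μ : Measure M} [IsFiniteMeasure μ]
  {ι : Type*} {l : Filter ι} {I : ι → Set G} {c : ι → G}

theorem tendsto_measure_compl_returnSet_inter (hinv : ∀ t, MeasurePreserving (φ t) μ μ)
    (hc : ∀ i, ∀ᶠ j in l, -c i + c j ∈ I j) (hA_meas : MeasurableSet A)
    (hA : ∀ x ∈ A, ∀ y ∈ A, dist x y < ε) :
    Tendsto (fun i ↦ μ ((returnSet φ (I i) ε)ᶜ ∩ A)) l (𝓝 0) := by
  have hmeas (i : ι) : MeasurableSet ((returnSet φ (I i) ε)ᶜ ∩ A) :=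
    (isOpen_returnSet φ (I i) ε).measurableSet.compl.inter hA_meas
  have htranslates :
      Tendsto (fun i ↦ μ (φ (-c i) ⁻¹' ((returnSet φ (I i) ε)ᶜ ∩ A))) l (𝓝 0) :=
    tendsto_measure_zero_of_eventually_aedisjoint
      (fun i ↦ ((hinv _).measurable (hmeas i)).nullMeasurableSet) fun i ↦
        (hc i).mono fun _ hij ↦
          ((disjoint_preimage_neg_compl_returnSet_inter hA hij).mono_left
            (preimage_mono inter_subset_right)).aedisjoint
  simpa only [(hinv _).measure_preimage (hmeas _).nullMeasurableSet] using htranslates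

variable [SeparableSpace M]

theorem tendsto_measure_compl_returnSet (hinv : ∀ t, MeasurePreserving (φ t) μ μ)
    (hc : ∀ i, ∀ᶠ j in l, -c i + c j ∈ I j) (hε : 0 < ε) :
    Tendsto (fun i ↦ μ (returnSet φ (I i) ε)ᶜ) l (𝓝 0) := by
  obtain ⟨s, hs_countable, hs_dense⟩ := exists_countable_dense M
  have : Countable s := hs_countable.to_subtype
  have hcover : ⋃ x : s, Metric.ball (x : M) (ε / 2) = univ := by
    rw [iUnion_coe_set]
    exact (Metric.dense_iff_iUnion_ball s).1 hs_dense _ (half_pos hε)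
  refine tendsto_measure_zero_of_tendsto_measure_inter
    (A := fun x : s ↦ Metric.ball (x : M) (ε / 2))
    (fun _ ↦ measurableSet_ball.nullMeasurableSet) (by rw [hcover, compl_univ, measure_empty])
    fun x ↦ tendsto_measure_compl_returnSet_inter hinv hc measurableSet_ball fun y hy z hz ↦ ?_
  calc
    dist y z ≤ dist y x + dist z x := dist_triangle_right y z x
    _ < ε / 2 + ε / 2 := add_lt_add hy hz
    _ = ε := add_halves ε

theorem tendsto_measure_returnSet (hinv : ∀ t, MeasurePreserving (φ t) μ μ)
    (hc : ∀ i, ∀ᶠ j in l, -c i + c j ∈ I j) (hε : 0 < ε) :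
    Tendsto (fun i ↦ μ (returnSet φ (I i) ε)) l (𝓝 (μ univ)) := by
  have hsub := ENNReal.Tendsto.sub tendsto_const_nhds (tendsto_measure_compl_returnSet hinv hc hε)
    (.inl (measure_ne_top μ univ))
  rw [tsub_zero] at hsub
  refine hsub.congr fun i ↦ ?_
  rw [← measure_compl (isOpen_returnSet φ (I i) ε).measurableSet.compl (measure_ne_top μ _),
    compl_compl]

end Recurrence

theorem eventually_midpoint_sub_mem_Icc {ι : Type*} {l : Filter ι} {a b : ι → ℝ}
    (hab : Tendsto (fun i ↦ b i - a i) l atTop) (s : ℝ) :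
    ∀ᶠ i in l, -s + midpoint ℝ (a i) (b i) ∈ Icc (a i) (b i) := by
  filter_upwards [hab.eventually_ge_atTop (2 * |s|)] with i hi
  have hs := abs_le.1 (le_refl |s|)
  rw [midpoint_eq_smul_add, invOf_eq_inv, smul_eq_mul, mem_Icc]
  constructor <;> linarith

theorem measure_window_return_set_tendsto_one_general {M : Type*} [PseudoMetricSpace M]
    [SeparableSpace M] [MeasurableSpace M] [OpensMeasurableSpace M] (φ : Flow ℝ M) (μ : Measure M)
    [IsFiniteMeasure μ] (hinv : ∀ t, MeasurePreserving (φ t) μ μ) {ι : Type*} {l : Filter ι}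
    {a b : ι → ℝ} (hab : Tendsto (fun i ↦ b i - a i) l atTop) {ε : ℝ} (hε : 0 < ε) :
    Tendsto (fun i ↦ μ {v | ∃ t ∈ Icc (a i) (b i), dist v (φ t v) < ε}) l (𝓝 (μ univ)) :=
  tendsto_measure_returnSet hinv (c := fun i ↦ midpoint ℝ (a i) (b i))
    (fun _ ↦ eventually_midpoint_sub_mem_Icc hab _) hε

theorem measure_window_return_set_tendsto_one
    {M : Type*} [MetricSpace M] [CompactSpace M] [MeasurableSpace M] [BorelSpace M]
    (φ : Flow ℝ M) (μ : Measure M) [IsProbabilityMeasure μ]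
    (hinv : ∀ t : ℝ, MeasurePreserving (φ t) μ μ)
    (herg : ∀ s : Set M, MeasurableSet s → (∀ t : ℝ, φ t ⁻¹' s = s) →
      μ s = 0 ∨ μ s = 1)
    (ε : ℝ) (hε : 0 < ε) :
    Filter.Tendsto
      (fun T : ℝ => μ {v : M | ∃ t ∈ Set.Icc T ((1 + ε) * T), dist v (φ t v) < ε})
      Filter.atTop (nhds 1) := by
  have hlength : Tendsto (fun T : ℝ ↦ (1 + ε) * T - T) atTop atTop := by
    simpa only [add_mul, one_mul, add_sub_cancel_left, id_eq] using
      tendsto_id.const_mul_atTop hε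
  rw [← measure_univ (μ := μ)]
  exact measure_window_return_set_tendsto_one_general φ μ hinv hlength hε
end

section
/- Let M be a compact metric space, φ a continuous flow of ℝ on M (Flow ℝ M), and μ a Borel probability measure on M such that for every t ∈ ℝ the time-t map φ t is measure-preserving for μ, and such that μ is ergodic for the flow: every measurable set s ⊆ M with (φ t)⁻¹(s) = s for all t ∈ ℝ satisfies μ(s) = 0 or μ(s) = 1. Let K ⊆ M be a measurable set with μ(K) > 0 and let ε > 0. Then for μ-almost every v ∈ M there exists T₀ > 0 such that for every real T ≥ T₀ there exists t ∈ [T, (1+ε)·T] with φ t v ∈ K. -/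
open MeasureTheory

/-!
Let `g = 𝟙_K`.  Up to an integer time, the integral of `g` along an orbit is the Birkhoff sum of
`G v = ∫₀¹ g (s +ᵥ v) ds` under the time-one map, so by the maximal ergodic theorem the upper time
average of `g` cannot exceed some `b > ∫ g` almost everywhere.  Since `g` is bounded, this upper
average is strictly invariant under every time-`t` map, so ergodicity bounds it by `∫ g` almost
everywhere.  The same bound for `-g` gives convergence of the time averages to `μ K > 0`.  The time
spent in `K` up to `T` is then asymptotic to `μ K * T`, hence for large `T` strictly larger at
`(1 + ε) * T` than at `T`, which forces a visit in between.
-/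

open Filter Set Topology

section MaximalErgodic

theorem partialSups_birkhoffSum_le {α R : Type*} [AddCommMonoid R] [LinearOrder R]
    [IsOrderedAddMonoid R] (f : α → α) (g : α → R) (n : ℕ) (x : α)
    (hpos : 0 < partialSups (birkhoffSum f g) n x) :
    partialSups (birkhoffSum f g) n x ≤ g x + partialSups (birkhoffSum f g) n (f x) := by
  simp only [Pi.partialSups_apply] at hpos ⊢
  obtain ⟨k, hkn, hk⟩ := exists_partialSups_eq (fun i => birkhoffSum f g i x) n
  rw [hk] at hpos ⊢
  cases k with
  | zero => simp [birkhoffSum_zero] at hpos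
  | succ k =>
    rw [birkhoffSum_succ']
    gcongr
    exact le_partialSups_of_le (fun i => birkhoffSum f g i (f x)) (Nat.le_of_succ_le hkn)

theorem partialSups_birkhoffSum_nonneg {α R : Type*} [AddCommMonoid R] [SemilatticeSup R]
    (f : α → α) (g : α → R) (n : ℕ) (x : α) : 0 ≤ partialSups (birkhoffSum f g) n x := by
  simpa only [birkhoffSum_zero', Pi.zero_apply] using
    le_partialSups_of_le (birkhoffSum f g) n.zero_le x

variable {α : Type*} [MeasurableSpace α] {μ : Measure α} {f : α → α} {g : α → ℝ}

theorem integrable_partialSups {E : Type*} [NormedAddCommGroup E] [Lattice E] [HasSolidNorm E]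
    [IsOrderedAddMonoid E] {u : ℕ → α → E} (hu : ∀ n, Integrable (u n) μ) (n : ℕ) :
    Integrable (partialSups u n) μ := by
  induction n with
  | zero => simpa using hu 0
  | succ n ih => simpa only [partialSups_add_one] using ih.sup (hu (n + 1))

theorem integrable_birkhoffSum {E : Type*} [NormedAddCommGroup E] {g : α → E}
    (hf : MeasurePreserving f μ μ) (hg : Integrable g μ) (n : ℕ) :
    Integrable (birkhoffSum f g n) μ :=
  integrable_finsetSum _ fun k _ => (hf.iterate k).integrable_comp_of_integrable hg

theorem integral_comp_of_measurePreserving {β E : Type*} [MeasurableSpace β] {ν : Measure β}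
    [NormedAddCommGroup E] [NormedSpace ℝ E] {f : α → β} {g : β → E}
    (hf : MeasurePreserving f μ ν) (hg : AEStronglyMeasurable g ν) :
    ∫ x, g (f x) ∂μ = ∫ y, g y ∂ν := by
  rw [← integral_map hf.aemeasurable (hf.map_eq.symm ▸ hg), hf.map_eq]

theorem nullMeasurableSet_partialSups_birkhoffSum_pos (hf : MeasurePreserving f μ μ)
    (hg : Integrable g μ) (n : ℕ) :
    NullMeasurableSet {x | 0 < partialSups (birkhoffSum f g) n x} μ :=
  nullMeasurableSet_lt aemeasurable_const
    (integrable_partialSups (integrable_birkhoffSum hf hg) n).aemeasurable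

theorem setIntegral_partialSups_birkhoffSum_pos_nonneg (hf : MeasurePreserving f μ μ)
    (hg : Integrable g μ) (n : ℕ) :
    0 ≤ ∫ x in {x | 0 < partialSups (birkhoffSum f g) n x}, g x ∂μ := by
  set m := partialSups (birkhoffSum f g) n
  have hm : Integrable m μ := integrable_partialSups (integrable_birkhoffSum hf hg) n
  have hmf : Integrable (fun x => m (f x)) μ := hf.integrable_comp_of_integrable hm
  set S := {x | 0 < m x}
  have hS : NullMeasurableSet S μ := nullMeasurableSet_partialSups_birkhoffSum_pos hf hg n
  have hle (x : α) : m x - m (f x) ≤ S.indicator g x := by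
    by_cases hx : 0 < m x
    · rw [indicator_of_mem (s := S) hx]
      linarith [partialSups_birkhoffSum_le f g n x hx]
    · rw [indicator_of_notMem (s := S) hx]
      linarith [partialSups_birkhoffSum_nonneg f g n (f x)]
  calc (0 : ℝ) = ∫ x, (m x - m (f x)) ∂μ := by
        rw [integral_sub hm hmf, integral_comp_of_measurePreserving hf hm.aestronglyMeasurable,
          sub_self]
    _ ≤ ∫ x, S.indicator g x ∂μ := integral_mono (hm.sub hmf) (hg.indicator₀ hS) hle
    _ = ∫ x in S, g x ∂μ := integral_indicator₀ hS

theorem setIntegral_exists_birkhoffSum_pos_nonneg (hf : MeasurePreserving f μ μ)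
    (hg : Integrable g μ) : 0 ≤ ∫ x in {x | ∃ n, 0 < birkhoffSum f g n x}, g x ∂μ := by
  have hUnion : {x | ∃ n, 0 < birkhoffSum f g n x}
      = ⋃ n, {x | 0 < partialSups (birkhoffSum f g) n x} := by
    ext x
    simp only [mem_ofPred, mem_iUnion]
    refine ⟨fun ⟨n, hn⟩ => ⟨n, hn.trans_le (le_partialSups (birkhoffSum f g) n x)⟩, ?_⟩
    rintro ⟨n, hn⟩
    rw [Pi.partialSups_apply] at hn
    obtain ⟨k, -, hk⟩ := exists_partialSups_eq (fun i => birkhoffSum f g i x) n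
    exact ⟨k, hk ▸ hn⟩
  rw [hUnion]
  refine ge_of_tendsto' (tendsto_setIntegral_of_monotone₀
    (nullMeasurableSet_partialSups_birkhoffSum_pos hf hg) ?_ hg.integrableOn)
    (setIntegral_partialSups_birkhoffSum_pos_nonneg hf hg)
  exact fun i j hij x hx => lt_of_lt_of_le hx ((partialSups (birkhoffSum f g)).monotone hij x)

end MaximalErgodic

section TimeAverages

variable {M : Type*} [AddAction ℝ M] {g : M → ℝ} {C : ℝ}

/-- The integral `∫₀ᵀ g (s +ᵥ v) ds` of an observable `g` along the orbit of `v` under an action of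
the time axis `ℝ`.  For the indicator function of a set it is the time spent in that set. -/
noncomputable def orbitIntegral (g : M → ℝ) (T : ℝ) (v : M) : ℝ :=
  ∫ s in (0 : ℝ)..T, g (s +ᵥ v)

/-- The upper time average of `g` along the orbit of `v`.  It is sampled at integer times, which
makes it measurable, and takes values in `EReal`, where no boundedness is needed for the limit
superior to have its usual meaning. -/
noncomputable def upperTimeAverage (g : M → ℝ) (v : M) : EReal :=
  limsup (fun n : ℕ => ((orbitIntegral g n v / n : ℝ) : EReal)) atTop

theorem orbitIntegral_neg (g : M → ℝ) (T : ℝ) (v : M) :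
    orbitIntegral (-g) T v = -orbitIntegral g T v :=
  intervalIntegral.integral_neg

theorem abs_orbitIntegral_le (hC : ∀ x, |g x| ≤ C) (T : ℝ) (v : M) :
    |orbitIntegral g T v| ≤ C * |T| := by
  simpa only [orbitIntegral, Real.norm_eq_abs, sub_zero] using
    intervalIntegral.norm_integral_le_of_norm_le_const (a := 0) (b := T)
      (f := fun s : ℝ => g (s +ᵥ v)) fun s _ => hC (s +ᵥ v)

theorem tendsto_orbitIntegral_natCast_div {c : ℝ} {v : M} (hupper : upperTimeAverage g v ≤ c)
    (hlower : upperTimeAverage (-g) v ≤ (-c : ℝ)) :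
    Tendsto (fun n : ℕ => orbitIntegral g n v / n) atTop (𝓝 c) := by
  refine EReal.tendsto_coe.1 (tendsto_of_le_liminf_of_limsup_le ?_ hupper)
  have hneg : upperTimeAverage (-g) v
      = -liminf (fun n : ℕ => ((orbitIntegral g n v / n : ℝ) : EReal)) atTop := by
    rw [← EReal.limsup_neg]
    simp only [upperTimeAverage, orbitIntegral_neg, neg_div, EReal.coe_neg]
    rfl
  rwa [hneg, EReal.coe_neg, EReal.neg_le_neg_iff] at hlower

variable [MeasurableSpace M] [MeasurableVAdd₂ ℝ M]

theorem intervalIntegrable_comp_vadd (hg : Measurable g) (hC : ∀ x, |g x| ≤ C) (v : M) (a b : ℝ) :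
    IntervalIntegrable (fun s : ℝ => g (s +ᵥ v)) volume a b :=
  (intervalIntegrable_const (c := C)).mono_fun'
    (hg.comp (measurable_id.vadd_const v)).aestronglyMeasurable (.of_forall fun s => hC (s +ᵥ v))

theorem orbitIntegral_sub (hg : Measurable g) (hC : ∀ x, |g x| ≤ C) (v : M) (S T : ℝ) :
    orbitIntegral g T v - orbitIntegral g S v = ∫ s in S..T, g (s +ᵥ v) :=
  intervalIntegral.integral_interval_sub_left (intervalIntegrable_comp_vadd hg hC v 0 T)
    (intervalIntegrable_comp_vadd hg hC v 0 S)

theorem orbitIntegral_add (hg : Measurable g) (hC : ∀ x, |g x| ≤ C) (v : M) (S T : ℝ) :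
    orbitIntegral g (S + T) v = orbitIntegral g S v + orbitIntegral g T (S +ᵥ v) := by
  have hshift : orbitIntegral g T (S +ᵥ v) = ∫ s in S..(S + T), g (s +ᵥ v) := by
    simpa only [orbitIntegral, add_vadd, zero_add, add_comm T S] using
      intervalIntegral.integral_comp_add_right (a := 0) (b := T) (fun s => g (s +ᵥ v)) S
  rw [hshift, ← orbitIntegral_sub hg hC, add_sub_cancel]

theorem abs_orbitIntegral_sub_orbitIntegral_vadd_le (hg : Measurable g) (hC : ∀ x, |g x| ≤ C)
    (T t : ℝ) (v : M) :
    |orbitIntegral g T v - orbitIntegral g T (t +ᵥ v)| ≤ 2 * C * |t| := by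
  have hcocycle : orbitIntegral g T v - orbitIntegral g T (t +ᵥ v)
      = orbitIntegral g t v - orbitIntegral g t (T +ᵥ v) := by
    have hTt := orbitIntegral_add hg hC v T t
    have htT := orbitIntegral_add hg hC v t T
    rw [add_comm T t] at hTt
    linarith
  rw [hcocycle, two_mul, add_mul]
  exact (abs_sub _ _).trans
    (add_le_add (abs_orbitIntegral_le hC t v) (abs_orbitIntegral_le hC t (T +ᵥ v)))

theorem measurable_orbitIntegral (hg : Measurable g) (T : ℝ) : Measurable (orbitIntegral g T) := by
  have huncurry : StronglyMeasurable (Function.uncurry fun (v : M) (s : ℝ) => g (s +ᵥ v)) :=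
    (hg.comp (measurable_snd.vadd measurable_fst)).stronglyMeasurable
  exact huncurry.integral_prod_right.measurable.sub huncurry.integral_prod_right.measurable

theorem orbitIntegral_natCast (hg : Measurable g) (hC : ∀ x, |g x| ≤ C) (n : ℕ) (v : M) :
    orbitIntegral g n v = birkhoffSum ((1 : ℝ) +ᵥ ·) (orbitIntegral g 1) n v := by
  induction n generalizing v with
  | zero => simp [orbitIntegral, birkhoffSum_zero]
  | succ n ih =>
    rw [birkhoffSum_succ', ← ih, Nat.cast_succ, add_comm (n : ℝ), orbitIntegral_add hg hC]

section Measure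

variable {μ : Measure M} [IsFiniteMeasure μ]

theorem integrable_orbitIntegral (hg : Measurable g) (hC : ∀ x, |g x| ≤ C) (T : ℝ) :
    Integrable (orbitIntegral g T) μ :=
  .of_bound (measurable_orbitIntegral hg T).aestronglyMeasurable (C * |T|)
    (.of_forall (abs_orbitIntegral_le hC T))

theorem integral_orbitIntegral [VAddInvariantMeasure ℝ M μ] (hg : Measurable g)
    (hC : ∀ x, |g x| ≤ C) (T : ℝ) :
    ∫ v, orbitIntegral g T v ∂μ = T * ∫ v, g v ∂μ := by
  have : IsFiniteMeasure (volume.restrict (uIoc 0 T)) := by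
    rw [uIoc]
    infer_instance
  have hint : Integrable (Function.uncurry fun (s : ℝ) (v : M) => g (s +ᵥ v))
      ((volume.restrict (uIoc 0 T)).prod μ) :=
    .of_bound (hg.comp measurable_vadd).aestronglyMeasurable C (.of_forall fun p => hC (p.1 +ᵥ p.2))
  calc ∫ v, orbitIntegral g T v ∂μ = ∫ s in (0 : ℝ)..T, ∫ v, g (s +ᵥ v) ∂μ :=
        (intervalIntegral_integral_swap hint).symm
    _ = T * ∫ v, g v ∂μ := by simp [integral_vadd_eq_self g]

end Measure

theorem measurable_upperTimeAverage (hg : Measurable g) : Measurable (upperTimeAverage g) :=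
  .limsup fun n => ((measurable_orbitIntegral hg n).div_const (n : ℝ)).coe_real_ereal

theorem upperTimeAverage_le_vadd (hg : Measurable g) (hC : ∀ x, |g x| ≤ C) (t : ℝ) (v : M) :
    upperTimeAverage g v ≤ upperTimeAverage g (t +ᵥ v) := by
  let d (n : ℕ) : ℝ := (orbitIntegral g n v - orbitIntegral g n (t +ᵥ v)) / n
  have hd : Tendsto d atTop (𝓝 0) :=
    squeeze_zero_norm (fun n => by
      rw [Real.norm_eq_abs, abs_div, Nat.abs_cast]
      gcongr
      exact abs_orbitIntegral_sub_orbitIntegral_vadd_le hg hC n t v)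
      (tendsto_const_div_atTop_nhds_zero_nat (2 * C * |t|))
  have hlimsup : limsup (fun n => (d n : EReal)) atTop = 0 := (EReal.tendsto_coe.2 hd).limsup_eq
  calc upperTimeAverage g v
      = limsup ((fun n : ℕ => ((orbitIntegral g n (t +ᵥ v) / n : ℝ) : EReal))
          + fun n => (d n : EReal)) atTop := by
        refine limsup_congr (.of_forall fun n => ?_)
        rw [Pi.add_apply, ← EReal.coe_add, ← add_div, add_sub_cancel]
    _ ≤ upperTimeAverage g (t +ᵥ v) + limsup (fun n => (d n : EReal)) atTop :=
        EReal.limsup_add_le (.inr (by simp [hlimsup])) (.inr (by simp [hlimsup]))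
    _ = upperTimeAverage g (t +ᵥ v) := by rw [hlimsup, add_zero]

theorem upperTimeAverage_vadd (hg : Measurable g) (hC : ∀ x, |g x| ≤ C) (t : ℝ) (v : M) :
    upperTimeAverage g (t +ᵥ v) = upperTimeAverage g v := by
  refine le_antisymm ?_ (upperTimeAverage_le_vadd hg hC t v)
  simpa only [neg_vadd_vadd] using upperTimeAverage_le_vadd hg hC (-t) (t +ᵥ v)

theorem exists_birkhoffSum_pos_of_lt_upperTimeAverage (hg : Measurable g) (hC : ∀ x, |g x| ≤ C)
    {a : ℝ} {v : M} (hv : a < upperTimeAverage g v) :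
    ∃ n, (0 : ℝ) < birkhoffSum ((1 : ℝ) +ᵥ ·) (orbitIntegral g 1 - fun _ => a) n v := by
  obtain ⟨n, hlt, hn⟩ :=
    ((frequently_lt_of_lt_limsup (by isBoundedDefault) hv).and_eventually
      (eventually_gt_atTop 0)).exists
  refine ⟨n, ?_⟩
  have hsum : birkhoffSum ((1 : ℝ) +ᵥ ·) (orbitIntegral g 1 - fun _ => a) n v
      = orbitIntegral g n v - n * a := by
    rw [orbitIntegral_natCast hg hC]
    simp [birkhoffSum]
  rw [EReal.coe_lt_coe_iff, lt_div_iff₀ (Nat.cast_pos.2 hn)] at hlt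
  linarith

theorem le_integral_of_ae_lt_upperTimeAverage {μ : Measure M} [IsProbabilityMeasure μ]
    [VAddInvariantMeasure ℝ M μ] (hg : Measurable g) (hC : ∀ x, |g x| ≤ C) {a : ℝ}
    (ha : ∀ᵐ v ∂μ, a < upperTimeAverage g v) : a ≤ ∫ v, g v ∂μ := by
  have hint : Integrable (orbitIntegral g 1) μ := integrable_orbitIntegral hg hC 1
  have hmax := setIntegral_exists_birkhoffSum_pos_nonneg (measurePreserving_vadd (1 : ℝ) μ)
    (hint.sub (integrable_const a))
  have hfull : {v | ∃ n, (0 : ℝ) < birkhoffSum ((1 : ℝ) +ᵥ ·) (orbitIntegral g 1 - fun _ => a) n v}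
      =ᵐ[μ] univ :=
    eventuallyEq_univ.2
      (ha.mono fun _ hv => exists_birkhoffSum_pos_of_lt_upperTimeAverage hg hC hv)
  rw [setIntegral_congr_set hfull, setIntegral_univ, integral_sub' hint (integrable_const a),
    integral_orbitIntegral hg hC, one_mul, integral_const, probReal_univ, one_smul] at hmax
  exact sub_nonneg.1 hmax

theorem tendsto_orbitIntegral_div (hg : Measurable g) (hC : ∀ x, |g x| ≤ C) {c : ℝ} {v : M}
    (h : Tendsto (fun n : ℕ => orbitIntegral g n v / n) atTop (𝓝 c)) :
    Tendsto (fun T : ℝ => orbitIntegral g T v / T) atTop (𝓝 c) := by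
  have hfloor : Tendsto (fun T : ℝ => orbitIntegral g ⌊T⌋₊ v / ⌊T⌋₊ * (⌊T⌋₊ / T)) atTop (𝓝 c) := by
    simpa using (h.comp tendsto_nat_floor_atTop).mul (tendsto_nat_floor_div_atTop (R := ℝ))
  have hremainder : Tendsto
      (fun T : ℝ => (orbitIntegral g T v - orbitIntegral g ⌊T⌋₊ v) / T) atTop (𝓝 0) := by
    refine squeeze_zero_norm' ?_ (tendsto_const_nhds (x := C) |>.div_atTop tendsto_id)
    filter_upwards [eventually_gt_atTop 0] with T hT
    have hfract : |T - ⌊T⌋₊| ≤ 1 := by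
      rw [abs_of_nonneg (sub_nonneg.2 (Nat.floor_le hT.le))]
      linarith [Nat.lt_floor_add_one T]
    have hC0 : 0 ≤ C := (abs_nonneg _).trans (hC v)
    rw [norm_div, Real.norm_of_nonneg hT.le, orbitIntegral_sub hg hC, id]
    gcongr
    exact (intervalIntegral.norm_integral_le_of_norm_le_const fun s _ => hC (s +ᵥ v)).trans
      (mul_le_of_le_one_right hC0 hfract)
  refine (by simpa using hfloor.add hremainder : Tendsto _ atTop (𝓝 c)).congr' ?_
  filter_upwards [eventually_ge_atTop 1] with T hT
  have hfloor_pos : (0 : ℝ) < ⌊T⌋₊ := Nat.cast_pos.2 (Nat.floor_pos.2 hT)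
  field_simp
  ring

end TimeAverages

section Ergodic

variable {M : Type*} [AddAction ℝ M] [MeasurableSpace M] [MeasurableVAdd₂ ℝ M] {μ : Measure M}
  [IsProbabilityMeasure μ] [VAddInvariantMeasure ℝ M μ] {g : M → ℝ} {C : ℝ}

theorem ae_upperTimeAverage_le_integral
    (herg : ∀ s : Set M, MeasurableSet s → (∀ t : ℝ, (t +ᵥ ·) ⁻¹' s = s) → μ s = 0 ∨ μ s = 1)
    (hg : Measurable g) (hC : ∀ x, |g x| ≤ C) :
    ∀ᵐ v ∂μ, upperTimeAverage g v ≤ (∫ x, g x ∂μ : ℝ) := by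
  refine (ae_le_const_iff_forall_gt_measure_zero _ _).2 fun b hb => ?_
  have hmeas : MeasurableSet {v | b ≤ upperTimeAverage g v} :=
    measurableSet_le measurable_const (measurable_upperTimeAverage hg)
  have hinvariant (t : ℝ) :
      (t +ᵥ ·) ⁻¹' {v | b ≤ upperTimeAverage g v} = {v | b ≤ upperTimeAverage g v} := by
    simp only [preimage_ofPred_eq, upperTimeAverage_vadd hg hC]
  refine (herg _ hmeas hinvariant).resolve_right fun hone => ?_
  obtain ⟨a, hca, hab⟩ := EReal.exists_between_coe_real hb
  have hae : ∀ᵐ v ∂μ, a < upperTimeAverage g v :=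
    Eventually.mono ((mem_ae_iff_prob_eq_one hmeas).2 hone) fun _ hv => hab.trans_le hv
  exact (EReal.coe_lt_coe_iff.1 hca).not_ge (le_integral_of_ae_lt_upperTimeAverage hg hC hae)

theorem ae_tendsto_orbitIntegral_div
    (herg : ∀ s : Set M, MeasurableSet s → (∀ t : ℝ, (t +ᵥ ·) ⁻¹' s = s) → μ s = 0 ∨ μ s = 1)
    (hg : Measurable g) (hC : ∀ x, |g x| ≤ C) :
    ∀ᵐ v ∂μ, Tendsto (fun T : ℝ => orbitIntegral g T v / T) atTop (𝓝 (∫ x, g x ∂μ)) := by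
  have hlower := ae_upperTimeAverage_le_integral herg hg.neg (C := C) (by simpa using hC)
  simp only [integral_neg'] at hlower
  filter_upwards [ae_upperTimeAverage_le_integral herg hg hC, hlower] with v hv hv'
  exact tendsto_orbitIntegral_div hg hC (tendsto_orbitIntegral_natCast_div hv hv')

end Ergodic

section WindowHitting

theorem eventually_lt_comp_mul_of_tendsto_div {F : ℝ → ℝ} {c r : ℝ} (hc : 0 < c) (hr : 1 < r)
    (hF : Tendsto (fun T => F T / T) atTop (𝓝 c)) : ∀ᶠ T in atTop, F T < F (r * T) := by
  have hr0 : 0 < r := one_pos.trans hr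
  have hscaled : Tendsto (fun T => F (r * T) / (r * T) * r) atTop (𝓝 (c * r)) :=
    (hF.comp (tendsto_id.const_mul_atTop hr0)).mul_const r
  filter_upwards [hF.eventually_lt hscaled (lt_mul_of_one_lt_right hc hr),
    eventually_gt_atTop 0] with T hlt hT
  have hcancel : F (r * T) / (r * T) * r = F (r * T) / T := by field_simp
  rwa [hcancel, div_lt_div_iff_of_pos_right hT] at hlt

theorem exists_mem_uIoc_ne_zero_of_orbitIntegral_ne {M : Type*} [AddAction ℝ M]
    [MeasurableSpace M] [MeasurableVAdd₂ ℝ M] {g : M → ℝ} {C : ℝ} (hg : Measurable g)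
    (hC : ∀ x, |g x| ≤ C) {S T : ℝ} {v : M} (hne : orbitIntegral g S v ≠ orbitIntegral g T v) :
    ∃ t ∈ uIoc S T, g (t +ᵥ v) ≠ 0 := by
  contrapose! hne
  rw [eq_comm, ← sub_eq_zero, orbitIntegral_sub hg hC]
  exact intervalIntegral.integral_zero_ae (.of_forall hne)

theorem ae_eventually_window_hitting_flow_general {M : Type*} [AddAction ℝ M] [MeasurableSpace M]
    [MeasurableVAdd₂ ℝ M] (μ : Measure M) [IsProbabilityMeasure μ] [VAddInvariantMeasure ℝ M μ]
    (herg : ∀ s : Set M, MeasurableSet s → (∀ t : ℝ, (t +ᵥ ·) ⁻¹' s = s) → μ s = 0 ∨ μ s = 1)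
    (K : Set M) (hK : MeasurableSet K) (hKpos : 0 < μ K) (ε : ℝ) (hε : 0 < ε) :
    ∀ᵐ v ∂μ, ∃ T₀ : ℝ, 0 < T₀ ∧ ∀ T : ℝ, T₀ ≤ T → ∃ t ∈ Icc T ((1 + ε) * T), t +ᵥ v ∈ K := by
  have hmeas : Measurable (K.indicator (1 : M → ℝ)) := measurable_one.indicator hK
  have hbound (x : M) : |K.indicator (1 : M → ℝ) x| ≤ 1 := by
    simpa using norm_indicator_le_norm_self (1 : M → ℝ) x
  have hpos : 0 < ∫ x, K.indicator (1 : M → ℝ) x ∂μ := by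
    rw [integral_indicator_one hK]
    exact ENNReal.toReal_pos hKpos.ne' (measure_ne_top μ K)
  filter_upwards [ae_tendsto_orbitIntegral_div herg hmeas hbound] with v hv
  obtain ⟨T₀, hT₀⟩ := (eventually_lt_comp_mul_of_tendsto_div hpos
    (lt_add_of_pos_right 1 hε) hv).exists_forall_of_atTop
  refine ⟨max T₀ 1, by positivity, fun T hT => ?_⟩
  obtain ⟨hT₀T, h1T⟩ := max_le_iff.1 hT
  have hwindow : T ≤ (1 + ε) * T := le_mul_of_one_le_left (by positivity) (by linarith)
  obtain ⟨t, ht, hne⟩ := exists_mem_uIoc_ne_zero_of_orbitIntegral_ne hmeas hbound (hT₀ T hT₀T).ne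
  rw [uIoc_of_le hwindow] at ht
  exact ⟨t, Ioc_subset_Icc_self ht, mem_of_indicator_ne_zero hne⟩

theorem measurableVAdd₂_toAddAction {M : Type*} [TopologicalSpace M] [MeasurableSpace M]
    [BorelSpace M] (φ : Flow ℝ M) :
    letI := φ.toAddAction
    MeasurableVAdd₂ ℝ M :=
  letI := φ.toAddAction
  ⟨(φ.continuous continuous_fst continuous_snd).measurable⟩

end WindowHitting

theorem ae_eventually_window_hitting_flow
    {M : Type*} [MetricSpace M] [CompactSpace M] [MeasurableSpace M] [BorelSpace M]
    (φ : Flow ℝ M) (μ : Measure M) [IsProbabilityMeasure μ]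
    (hinv : ∀ t : ℝ, MeasurePreserving (φ t) μ μ)
    (herg : ∀ s : Set M, MeasurableSet s → (∀ t : ℝ, φ t ⁻¹' s = s) →
      μ s = 0 ∨ μ s = 1)
    (K : Set M) (hK : MeasurableSet K) (hKpos : 0 < μ K) (ε : ℝ) (hε : 0 < ε) :
    ∀ᵐ v ∂μ, ∃ T₀ : ℝ, 0 < T₀ ∧ ∀ T : ℝ, T₀ ≤ T →
      ∃ t ∈ Set.Icc T ((1 + ε) * T), φ t v ∈ K := by
  let := φ.toAddAction
  have := measurableVAdd₂_toAddAction φ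
  have : VAddInvariantMeasure ℝ M μ :=
    ⟨fun t _ hs => (hinv t).measure_preimage hs.nullMeasurableSet⟩
  exact ae_eventually_window_hitting_flow_general μ herg K hK hKpos ε hε
end

section
/- Let n and k be positive integers with 2k ≤ n. Then the number of words w : Fin n → Fin 2 whose inversion number inv(w) = |{(i,j) : i < j and w(j) < w(i)}| is at most k² is at most 2·k·(n choose k)². -/
open Finset

theorem choose_le_choose_of_le_half {n j k : ℕ} (hjk : j ≤ k) (hk : k ≤ n / 2) :
    n.choose j ≤ n.choose k := by
  induction k, hjk using Nat.le_induction with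
  | base => rfl
  | succ m _ ih =>
    exact (ih (Nat.le_of_succ_le hk)).trans (Nat.choose_le_succ_of_lt_half_left hk)

theorem sum_range_choose_le_mul_choose {n k : ℕ} (hk : k ≤ n / 2) :
    ∑ j ∈ range k, n.choose j ≤ k * n.choose k := by
  simpa only [card_range, smul_eq_mul] using
    sum_le_card_nsmul (range k) n.choose (n.choose k)
      fun j hj ↦ choose_le_choose_of_le_half (mem_range.mp hj).le hk

section RelLowerSet

variable {α : Type*} [LinearOrder α] {k : ℕ}

theorem exists_isRelLowerSet_card_eq (P : Finset α) (hk : k ≤ #P) :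
    ∃ S : Finset α, IsRelLowerSet (S : Set α) (· ∈ P) ∧ #S = k := by
  induction P using induction_on_max with
  | empty => exact ⟨∅, by simp_all⟩
  | insert m P hm ih =>
    have hmP : m ∉ P := fun h ↦ (hm m h).false
    rcases hk.eq_or_lt with rfl | hlt
    · exact ⟨insert m P, isRelLowerSet_self, rfl⟩
    · rw [card_insert_of_notMem hmP, Nat.lt_succ_iff] at hlt
      obtain ⟨S, hS, hcard⟩ := ih hlt
      refine ⟨S, fun s hs ↦ ⟨mem_insert_of_mem (hS.prop_of_mem hs), fun x hxs hx ↦ ?_⟩, hcard⟩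
      have hxm : x < m := hxs.trans_lt (hm s (hS.prop_of_mem hs))
      exact hS.mem_of_le hs hxs (mem_of_mem_insert_of_ne hx hxm.ne)

theorem exists_isRelUpperSet_card_eq (P : Finset α) (hk : k ≤ #P) :
    ∃ T : Finset α, IsRelUpperSet (T : Set α) (· ∈ P) ∧ #T = k :=
  exists_isRelLowerSet_card_eq (α := αᵒᵈ) P hk

end RelLowerSet

section Inversions

variable {n : ℕ} {A : Type*} [LinearOrder A] {w : Fin n → A} {S T : Finset (Fin n)}

theorem card_mul_card_le_invNum (h : ∀ s ∈ S, ∀ t ∈ T, s < t ∧ w t < w s) :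
    #S * #T ≤ invNum w := by
  rw [← card_product]
  refine card_le_card fun p hp ↦ mem_filter.mpr ⟨mem_univ p, ?_⟩
  obtain ⟨hp₁, hp₂⟩ := mem_product.mp hp
  exact h p.1 hp₁ p.2 hp₂

theorem exists_mem_lt_of_invNum_lt {x y : A} (hxy : x < y)
    (hS : IsRelLowerSet (S : Set (Fin n)) (w · = y)) (hT : ∀ t ∈ T, w t = x)
    (hinv : invNum w < (#S + 1) * #T) {i : Fin n} (hi : w i = y) (hiS : i ∉ S) :
    ∃ t ∈ T, t < i := by
  by_contra! hiT
  refine hinv.not_ge ?_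
  rw [← card_insert_of_notMem hiS]
  refine card_mul_card_le_invNum fun s hs t ht ↦ ?_
  have hit : i < t := (hiT t ht).lt_of_ne <| by
    rintro rfl
    exact hxy.ne ((hT i ht).symm.trans hi)
  rw [hT t ht]
  rcases mem_insert.mp hs with rfl | hs
  · exact ⟨hit, hi ▸ hxy⟩
  · have hsi : s < i := lt_of_not_ge fun his ↦ hiS (hS.mem_of_le hs his hi)
    exact ⟨hsi.trans hit, (hS.prop_of_mem hs).symm ▸ hxy⟩

end Inversions

section TwoLetters

variable {n : ℕ}

theorem eq_of_forall_eq_iff_eq {ι : Type*} {v w : ι → Fin 2} (c : Fin 2)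
    (h : ∀ i, v i = c ↔ w i = c) : v = w := by
  funext i
  have := h i
  omega

theorem card_filter_card_letter_lt_le {ι : Type*} [Fintype ι] [DecidableEq ι] (c : Fin 2)
    (k : ℕ) :
    #{w : ι → Fin 2 | #{i | w i = c} < k} ≤ ∑ j ∈ range k, (Fintype.card ι).choose j := by
  calc #{w : ι → Fin 2 | #{i | w i = c} < k}
    _ ≤ #((range k).biUnion fun j ↦ powersetCard j (univ : Finset ι)) := by
        refine card_le_card_of_injOn (fun w ↦ ({i | w i = c} : Finset ι)) (fun w hw ↦ ?_)
          fun v _ w _ hvw ↦ eq_of_forall_eq_iff_eq c fun i ↦ ?_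
        · simpa [mem_powersetCard] using hw
        · simpa using Finset.ext_iff.mp hvw i
    _ ≤ ∑ j ∈ range k, #(powersetCard j (univ : Finset ι)) := card_biUnion_le
    _ = ∑ j ∈ range k, (Fintype.card ι).choose j := by simp only [card_powersetCard, card_univ]

/-- `S` consists of the positions of the first `#S` letters `1` of `w`, and `T` of the positions of
its last `#T` letters `0`. -/
def IsOuterPair (w : Fin n → Fin 2) (S T : Finset (Fin n)) : Prop :=
  IsRelLowerSet (S : Set (Fin n)) (w · = 1) ∧ IsRelUpperSet (T : Set (Fin n)) (w · = 0)

namespace IsOuterPair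

variable {v w : Fin n → Fin 2} {S T : Finset (Fin n)}

theorem apply_eq_one_iff (h : IsOuterPair w S T) (hinv : invNum w < (#S + 1) * #T) (i : Fin n) :
    w i = 1 ↔ i ∈ S ∨ i ∉ T ∧ ∃ t ∈ T, t < i := by
  obtain ⟨hS, hT⟩ := h
  constructor
  · refine fun hi ↦ or_iff_not_imp_left.mpr fun hiS ↦ ⟨fun hiT ↦ ?_, ?_⟩
    · exact zero_ne_one ((hT.prop_of_mem hiT).symm.trans hi)
    · exact exists_mem_lt_of_invNum_lt zero_lt_one hS (fun t ht ↦ hT.prop_of_mem ht) hinv hi hiS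
  · rintro (hiS | ⟨hiT, t, ht, hti⟩)
    · exact hS.prop_of_mem hiS
    · exact Fin.eq_one_of_ne_zero _ fun hi ↦ hiT (hT.mem_of_le ht hti.le hi)

theorem eq_of_invNum_lt (hv : IsOuterPair v S T) (hw : IsOuterPair w S T)
    (hinv_v : invNum v < (#S + 1) * #T) (hinv_w : invNum w < (#S + 1) * #T) : v = w :=
  eq_of_forall_eq_iff_eq 1 fun i ↦
    (hv.apply_eq_one_iff hinv_v i).trans (hw.apply_eq_one_iff hinv_w i).symm

end IsOuterPair

theorem exists_isOuterPair_card_eq {a b : ℕ} {w : Fin n → Fin 2} (ha : a ≤ #{i | w i = 1})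
    (hb : b ≤ #{i | w i = 0}) : ∃ S T, IsOuterPair w S T ∧ #S = a ∧ #T = b := by
  obtain ⟨S, hS, hSa⟩ := exists_isRelLowerSet_card_eq _ ha
  obtain ⟨T, hT, hTb⟩ := exists_isRelUpperSet_card_eq _ hb
  exact ⟨S, T, ⟨by simpa using hS, by simpa using hT⟩, hSa, hTb⟩

theorem card_filter_invNum_lt_of_le_card_letters_le (n a b : ℕ) :
    #{w : Fin n → Fin 2 |
        invNum w < (a + 1) * b ∧ a ≤ #{i | w i = 1} ∧ b ≤ #{i | w i = 0}} ≤
      n.choose a * n.choose b := by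
  calc _ ≤ #(powersetCard a (univ : Finset (Fin n)) ×ˢ powersetCard b univ) := by
        refine card_le_card_of_forall_subsingleton (fun w p ↦ IsOuterPair w p.1 p.2)
          (fun w hw ↦ ?_) ?_
        · obtain ⟨-, -, ha, hb⟩ := mem_filter.mp hw
          obtain ⟨S, T, hST, hS, hT⟩ := exists_isOuterPair_card_eq ha hb
          exact ⟨(S, T), by simp [mem_powersetCard, hS, hT], hST⟩
        · rintro ⟨S, T⟩ hp v ⟨hv, hvST⟩ w ⟨hw, hwST⟩
          obtain ⟨rfl, rfl⟩ : #S = a ∧ #T = b := by simpa [mem_powersetCard] using hp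
          exact hvST.eq_of_invNum_lt hwST (mem_filter.mp hv).2.1 (mem_filter.mp hw).2.1
    _ = n.choose a * n.choose b := by
        simp only [card_product, card_powersetCard, card_univ, Fintype.card_fin]

theorem card_filter_invNum_lt_le (n a b : ℕ) :
    #{w : Fin n → Fin 2 | invNum w < (a + 1) * b} ≤
      ∑ j ∈ range a, n.choose j + ∑ j ∈ range b, n.choose j + n.choose a * n.choose b := by
  let few (c : Fin 2) (k : ℕ) : Finset (Fin n → Fin 2) := {w | #{i | w i = c} < k}
  let many : Finset (Fin n → Fin 2) :=
    {w | invNum w < (a + 1) * b ∧ a ≤ #{i | w i = 1} ∧ b ≤ #{i | w i = 0}}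
  have few_le (c : Fin 2) (k : ℕ) : #(few c k) ≤ ∑ j ∈ range k, n.choose j := by
    simpa only [Fintype.card_fin] using card_filter_card_letter_lt_le (ι := Fin n) c k
  have cover : ({w | invNum w < (a + 1) * b} : Finset (Fin n → Fin 2)) ⊆
      few 1 a ∪ few 0 b ∪ many := by
    intro w
    simp only [few, many, mem_union, mem_filter, mem_univ, true_and]
    grind
  calc _ ≤ #(few 1 a ∪ few 0 b ∪ many) := card_le_card cover
    _ ≤ #(few 1 a) + #(few 0 b) + #many :=
        (card_union_le _ _).trans (Nat.add_le_add_right (card_union_le _ _) _)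
    _ ≤ _ := add_le_add (add_le_add (few_le 1 a) (few_le 0 b))
        (card_filter_invNum_lt_of_le_card_letters_le n a b)

end TwoLetters

theorem count_low_inversion_words_two_letters (n k : ℕ) (hn : 0 < n) (hk : 0 < k)
    (hkn : 2 * k ≤ n) :
    (Finset.univ.filter (fun w : Fin n → Fin 2 => invNum w ≤ k ^ 2)).card ≤
      2 * k * (n.choose k) ^ 2 := by
  have hk_half : k ≤ n / 2 := by omega
  have two_le_choose : 2 ≤ n.choose k :=
    calc 2 ≤ n := by omega
      _ = n.choose 1 := n.choose_one_right.symm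
      _ ≤ n.choose k := choose_le_choose_of_le_half hk hk_half
  have sq_lt : k ^ 2 < (k + 1) * k := by rw [sq]; gcongr; exact k.lt_succ_self
  have few_le := sum_range_choose_le_mul_choose hk_half
  calc #{w : Fin n → Fin 2 | invNum w ≤ k ^ 2}
    _ ≤ #{w : Fin n → Fin 2 | invNum w < (k + 1) * k} :=
        card_le_card (monotone_filter_right _ fun _ _ hw ↦ lt_of_le_of_lt hw sq_lt)
    _ ≤ ∑ j ∈ range k, n.choose j + ∑ j ∈ range k, n.choose j + n.choose k * n.choose k :=
        card_filter_invNum_lt_le n k k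
    _ ≤ k * n.choose k + k * n.choose k + n.choose k * n.choose k := by gcongr
    _ = (2 * k + n.choose k) * n.choose k := by ring
    _ ≤ 2 * k * n.choose k * n.choose k := by
        gcongr
        exact Nat.add_le_mul (by omega) two_le_choose
    _ = 2 * k * n.choose k ^ 2 := by ring
end

section
/- For every natural number n and every natural number c, the number of words w : Fin n → Fin 5 with inversion number at most c is at most the product of (the number of words u : Fin n → Fin 2 with inversion number at most c) and (the maximum over 0 ≤ m ≤ n of the number of words v : Fin m → Fin 4 with inversion number at most c). -/
/-!
A word is determined by its collapse `u` to two symbols together with the subword on the positions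
where `u` is `1`. Neither a monotone change of letters nor passing to a subword creates inversions,
so for each `u` the words collapsing to it are at most as many as the words over the remaining
letters, of length the number of `1`s in `u`, that obey the same bound on inversions.
-/

section

open Finset

variable {m n k : ℕ}

section InversionNumber

variable {A B : Type*} [LinearOrder A] [LinearOrder B]

theorem invNum_subword_le (w : Fin n → A) (e : Fin m ↪o Fin n) :
    invNum (w ∘ e) ≤ invNum w := by
  refine card_le_card_of_injOn (Prod.map e e) ?_ (e.injective.prodMap e.injective).injOn
  intro p hp
  simpa using hp

theorem invNum_monotone_comp_le {f : A → B} (hf : Monotone f) (w : Fin n → A) :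
    invNum (f ∘ w) ≤ invNum w :=
  card_le_card (monotone_filter_right univ fun _ _ hp => ⟨hp.1, hf.reflect_lt hp.2⟩)

theorem invNum_strictMono_comp {f : A → B} (hf : StrictMono f) (w : Fin n → A) :
    invNum (f ∘ w) = invNum w := by
  simp only [invNum, Function.comp_apply, hf.lt_iff_lt]

end InversionNumber

/-- The collapse of the alphabet `Fin (k + 1)` to two symbols: `0` stands for the smallest letter
and `1` for all the others. A word `w` collapses to `collapse ∘ w`. -/
def collapse (a : Fin (k + 1)) : Fin 2 :=
  if a = 0 then 0 else 1

theorem collapse_eq_one_iff {a : Fin (k + 1)} : collapse a = 1 ↔ a ≠ 0 := by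
  simp [collapse]

theorem collapse_monotone : Monotone (collapse : Fin (k + 1) → Fin 2) := by
  intro a b hab
  by_cases ha : a = 0
  · simp [collapse, ha]
  · have hb : b ≠ 0 := ((Fin.pos_of_ne_zero ha).trans_le hab).ne'
    rw [collapse_eq_one_iff.2 ha, collapse_eq_one_iff.2 hb]

theorem eq_of_collapse_eq_of_subword_eq {w w' : Fin n → Fin (k + 1)}
    (hcollapse : collapse ∘ w = collapse ∘ w')
    (hsubword : ∀ i, collapse (w i) = 1 → w i = w' i) : w = w' := by
  funext i
  by_cases hi : collapse (w i) = 1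
  · exact hsubword i hi
  · have hi' : ¬collapse (w' i) = 1 := fun h => hi ((congrFun hcollapse i).trans h)
    rw [collapse_eq_one_iff, not_not] at hi hi'
    rw [hi, hi']

theorem card_collapse_fiber_le (u : Fin n → Fin 2) (c : ℕ) :
    #{w : Fin n → Fin (k + 1) | invNum w ≤ c ∧ collapse ∘ w = u} ≤
      #{v : Fin #{i | u i = 1} → Fin k | invNum v ≤ c} := by
  let e := orderEmbOfFin {i | u i = 1} rfl
  have range_e (i : Fin n) : i ∈ Set.range e ↔ u i = 1 := by simp [e]
  -- Shifting `v` up, not `w` down, needs no junk predecessor of `0` and allows `k = 0`.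
  refine card_le_card_of_forall_subsingleton (fun w v => w ∘ e = Fin.succ ∘ v) ?_ ?_
  · intro w hw
    obtain ⟨hinv, rfl⟩ := (mem_filter_univ w).1 hw
    have letter_ne_zero (j) : w (e j) ≠ 0 :=
      collapse_eq_one_iff.1 ((range_e (e j)).1 (Set.mem_range_self j))
    choose v hv using fun j => Fin.exists_succ_eq.2 (letter_ne_zero j)
    have subword_eq : w ∘ e = Fin.succ ∘ v := funext fun j => (hv j).symm
    refine ⟨v, (mem_filter_univ v).2 ?_, subword_eq⟩
    calc invNum v = invNum (w ∘ e) := by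
          rw [subword_eq, invNum_strictMono_comp Fin.strictMono_succ]
      _ ≤ invNum w := invNum_subword_le w e
      _ ≤ c := hinv
  · rintro v - w ⟨hw, hwv⟩ w' ⟨hw', hwv'⟩
    obtain ⟨-, hcollapse⟩ := (mem_filter_univ w).1 hw
    obtain ⟨-, hcollapse'⟩ := (mem_filter_univ w').1 hw'
    refine eq_of_collapse_eq_of_subword_eq (hcollapse.trans hcollapse'.symm) fun i hi => ?_
    obtain ⟨j, rfl⟩ := (range_e i).2 ((congrFun hcollapse i).symm.trans hi)
    exact congrFun (hwv.trans hwv'.symm) j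

theorem count_words_five_le_two_mul_four_general (k n c : ℕ) :
    #{w : Fin n → Fin (k + 1) | invNum w ≤ c} ≤
      #{u : Fin n → Fin 2 | invNum u ≤ c} *
        (range (n + 1)).sup fun m => #{v : Fin m → Fin k | invNum v ≤ c} := by
  rw [mul_comm]
  refine card_le_mul_card_image_of_maps_to (f := (collapse ∘ ·)) (fun w hw => ?_) _ fun u _ => ?_
  · rw [mem_filter_univ] at hw ⊢
    exact (invNum_monotone_comp_le collapse_monotone w).trans hw
  · have length_mem : #{i | u i = 1} ∈ range (n + 1) :=
      mem_range_succ_iff.2 (card_finset_fin_le _)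
    rw [filter_filter]
    exact (card_collapse_fiber_le u c).trans
      (le_sup (f := fun m => #{v : Fin m → Fin k | invNum v ≤ c}) length_mem)

end

theorem count_words_five_le_two_mul_four (n c : ℕ) :
    (Finset.univ.filter (fun w : Fin n → Fin 5 => invNum w ≤ c)).card ≤
      (Finset.univ.filter (fun u : Fin n → Fin 2 => invNum u ≤ c)).card *
        (Finset.range (n + 1)).sup
          (fun m => (Finset.univ.filter (fun v : Fin m → Fin 4 => invNum v ≤ c)).card) :=
  count_words_five_le_two_mul_four_general 4 n c
end

section
/- Let (α, μ) be a probability space and f : α → α an ergodic measure-preserving map (Ergodic f μ). Let K ⊆ α be a measurable set with μ(K) > 0 and let ε > 0. Then for μ-almost every x ∈ α there exists N₀ ∈ ℕ such that for every natural number N ≥ N₀ there exists n ∈ ℕ with N ≤ n and (n : ℝ) ≤ (1+ε)·N and f^[n](x) ∈ K. -/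
open MeasureTheory

open Filter Function
open scoped ENNReal

/-!
Classify the points by the age `k` of their most recent visit to `K` up to time `n`. By invariance
the class of age `k` has the same measure as the set of points of `K` that do not return within `k`
steps, so the measures of the latter sets sum to at most `μ univ` (Kac's inequality). Repeating each
of them `M` times keeps the sum finite, and Borel–Cantelli shows that almost every orbit, whenever
it visits `K` at a late time `n`, returns within `n / M` steps. Almost every orbit meets `K` by
ergodicity, hence infinitely often by Poincaré recurrence, and with gaps this short it cannot miss
the window `[N, N + N / M]` for large `N`; take `1 / M < ε`.
-/

theorem tsum_natDiv_eq_mul_tsum (g : ℕ → ℝ≥0∞) (M : ℕ) [NeZero M] :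
    ∑' n, g (n / M) = M * ∑' k, g k := by
  calc ∑' n, g (n / M) = ∑' p : ℕ × Fin M, g p.1 := (Nat.divModEquiv M).tsum_eq (g ·.1)
    _ = ∑' k, M * g k := by simp [ENNReal.tsum_prod']
    _ = M * ∑' k, g k := ENNReal.tsum_mul_left

theorem eventually_exists_window_of_gap_le {p : ℕ → Prop} {g : ℕ → ℕ} (hg : Monotone g)
    (hgap : ∀ᶠ n in atTop, p n → ∃ j ∈ Set.Icc 1 (g n), p (j + n)) (hp : ∃ᶠ n in atTop, p n) :
    ∀ᶠ N in atTop, ∃ n, N ≤ n ∧ n ≤ N + g N ∧ p n := by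
  obtain ⟨N₁, hgap⟩ := eventually_atTop.1 hgap
  obtain ⟨m, hm, hpm⟩ := frequently_atTop.1 hp N₁
  filter_upwards [eventually_ge_atTop m] with N hN
  induction N, hN using Nat.le_induction with
  | base => exact ⟨m, le_rfl, Nat.le_add_right m _, hpm⟩
  | succ N hN ih =>
    have hg_succ : g N ≤ g (N + 1) := hg N.le_succ
    obtain ⟨n, hNn, hn, hpn⟩ := ih
    rcases hNn.eq_or_lt with rfl | hlt
    · obtain ⟨j, ⟨hj_pos, hj⟩, hpj⟩ := hgap N (hm.trans hN) hpn
      exact ⟨j + N, by lia, by lia, hpj⟩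
    · exact ⟨n, hlt, by lia, hpn⟩

section Return

variable {α : Type*} {f : α → α} {K : Set α}

/-- The points of `K` whose first return time to `K` under `f` exceeds `k`; points that never return
belong to all these sets. -/
def noReturnWithin (f : α → α) (K : Set α) (k : ℕ) : Set α :=
  {x ∈ K | ∀ j ∈ Set.Icc 1 k, f^[j] x ∉ K}

theorem pairwiseDisjoint_preimage_noReturnWithin (f : α → α) (K : Set α) (n : ℕ) :
    (Set.Iic n).PairwiseDisjoint fun k ↦ f^[n - k] ⁻¹' noReturnWithin f K k := by
  intro a ha b hb hab
  wlog hlt : a < b generalizing a b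
  · exact (this hb ha hab.symm (by lia)).symm
  refine Set.disjoint_left.2 fun x hxa hxb ↦ hxb.2 (b - a) ⟨by lia, by lia⟩ ?_
  have hbn : b ≤ n := hb
  rw [← iterate_add_apply, show b - a + (n - b) = n - a by lia]
  exact hxa.1

variable [MeasurableSpace α] {μ : Measure α}

theorem nullMeasurableSet_noReturnWithin (hf : Measure.QuasiMeasurePreserving f μ μ)
    (hK : NullMeasurableSet K μ) (k : ℕ) : NullMeasurableSet (noReturnWithin f K k) μ := by
  have hdiff : noReturnWithin f K k = K \ ⋃ j ∈ Set.Icc 1 k, f^[j] ⁻¹' K := by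
    ext x
    simp [noReturnWithin]
  rw [hdiff]
  exact hK.diff <| .biUnion (Set.to_countable _) fun j _ ↦ hK.preimage (hf.iterate j)

theorem measure_preimage_iterate_noReturnWithin (hf : MeasurePreserving f μ μ)
    (hK : NullMeasurableSet K μ) (n k : ℕ) :
    μ (f^[n] ⁻¹' noReturnWithin f K k) = μ (noReturnWithin f K k) :=
  (hf.iterate n).measure_preimage
    (nullMeasurableSet_noReturnWithin hf.quasiMeasurePreserving hK k)

theorem tsum_measure_noReturnWithin_le (hf : MeasurePreserving f μ μ)
    (hK : NullMeasurableSet K μ) : ∑' k, μ (noReturnWithin f K k) ≤ μ Set.univ := by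
  refine ENNReal.tsum_le_of_sum_range_le fun n ↦ ?_
  calc ∑ k ∈ Finset.range n, μ (noReturnWithin f K k)
      = ∑ k ∈ Finset.range n, μ (f^[n - k] ⁻¹' noReturnWithin f K k) := by
        simp only [measure_preimage_iterate_noReturnWithin hf hK]
    _ ≤ μ Set.univ := by
        refine sum_measure_le_measure_univ (fun k _ ↦ ?_) ?_
        · exact (nullMeasurableSet_noReturnWithin hf.quasiMeasurePreserving hK k).preimage
            (hf.iterate (n - k)).quasiMeasurePreserving
        · rw [Finset.coe_range]
          exact ((pairwiseDisjoint_preimage_noReturnWithin f K n).subset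
            Set.Iio_subset_Iic_self).aedisjoint

variable [IsFiniteMeasure μ]

theorem ae_eventually_iterate_notMem_noReturnWithin (hf : MeasurePreserving f μ μ)
    (hK : NullMeasurableSet K μ) (M : ℕ) [NeZero M] :
    ∀ᵐ x ∂μ, ∀ᶠ n in atTop, f^[n] x ∉ noReturnWithin f K (n / M) := by
  have hsum : ∑' n, μ (f^[n] ⁻¹' noReturnWithin f K (n / M)) ≠ ∞ := by
    simp only [measure_preimage_iterate_noReturnWithin hf hK]
    rw [tsum_natDiv_eq_mul_tsum (fun k ↦ μ (noReturnWithin f K k)) M]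
    exact ENNReal.mul_ne_top (ENNReal.natCast_ne_top M)
      (ne_top_of_le_ne_top (measure_ne_top μ _) (tsum_measure_noReturnWithin_le hf hK))
  exact ae_eventually_notMem hsum

theorem ae_eventually_exists_iterate_mem_window (hf : MeasurePreserving f μ μ)
    (hK : NullMeasurableSet K μ) (M : ℕ) [NeZero M] :
    ∀ᵐ x ∂μ, (∃ m, f^[m] x ∈ K) →
      ∀ᶠ N in atTop, ∃ n, N ≤ n ∧ n ≤ N + N / M ∧ f^[n] x ∈ K := by
  filter_upwards [ae_eventually_iterate_notMem_noReturnWithin hf hK M,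
    hf.conservative.ae_forall_image_mem_imp_frequently_image_mem hK]
    with x hreturn hrecur ⟨m, hm⟩
  refine eventually_exists_window_of_gap_le (p := (f^[·] x ∈ K))
    (fun _ _ h ↦ Nat.div_le_div_right h) (hreturn.mono fun n hn hnK ↦ ?_) (hrecur m hm)
  by_contra! hgap
  exact hn ⟨hnK, fun j hj ↦ by simpa only [iterate_add_apply] using hgap j hj⟩

theorem ae_eventually_window_hitting_map_general (hf : MeasurePreserving f μ μ)
    (hK : NullMeasurableSet K μ) {ε : ℝ} (hε : 0 < ε) :
    ∀ᵐ x ∂μ, (∃ m, f^[m] x ∈ K) →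
      ∀ᶠ N : ℕ in atTop, ∃ n : ℕ, N ≤ n ∧ (n : ℝ) ≤ (1 + ε) * N ∧ f^[n] x ∈ K := by
  obtain ⟨M, hM⟩ := exists_nat_one_div_lt hε
  filter_upwards [ae_eventually_exists_iterate_mem_window hf hK (M + 1)] with x hwindow hx
  filter_upwards [hwindow hx] with N ⟨n, hNn, hn, hnK⟩
  refine ⟨n, hNn, ?_, hnK⟩
  calc (n : ℝ) ≤ N + (N / (M + 1) : ℕ) := mod_cast hn
    _ ≤ N + N / ((M + 1 : ℕ) : ℝ) := by gcongr; exact Nat.cast_div_le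
    _ = (1 + 1 / (M + 1 : ℝ)) * N := by push_cast; ring
    _ ≤ (1 + ε) * N := by gcongr

theorem ae_exists_iterate_mem_of_ergodic (hf : Ergodic f μ) (hK : NullMeasurableSet K μ)
    (hK₀ : μ K ≠ 0) : ∀ᵐ x ∂μ, ∃ m, f^[m] x ∈ K := by
  set A : Set α := ⋃ m, f^[m] ⁻¹' K with hA
  have hA_meas : NullMeasurableSet A μ :=
    .iUnion fun m ↦ hK.preimage (hf.quasiMeasurePreserving.iterate m)
  have hA_preimage : f ⁻¹' A ⊆ A := by
    rw [hA, Set.preimage_iUnion]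
    exact Set.iUnion_subset fun m ↦ Set.subset_iUnion (fun m ↦ f^[m] ⁻¹' K) (m + 1)
  have hKA : K ⊆ A := Set.subset_iUnion (fun m ↦ f^[m] ⁻¹' K) 0
  rcases hf.ae_empty_or_univ_of_preimage_ae_le hA_meas hA_preimage.eventuallyLE with hnull | hfull
  · exact absurd (measure_mono_null hKA (ae_eq_empty.1 hnull)) hK₀
  · filter_upwards [eventuallyEq_univ.1 hfull] with x hx using Set.mem_iUnion.1 hx

end Return

theorem ae_eventually_window_hitting_map
    {α : Type*} [MeasurableSpace α] (μ : Measure α) [IsProbabilityMeasure μ]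
    (f : α → α) (hf : Ergodic f μ)
    (K : Set α) (hK : MeasurableSet K) (hKpos : 0 < μ K) (ε : ℝ) (hε : 0 < ε) :
    ∀ᵐ x ∂μ, ∃ N₀ : ℕ, ∀ N : ℕ, N₀ ≤ N →
      ∃ n : ℕ, N ≤ n ∧ (n : ℝ) ≤ (1 + ε) * N ∧ f^[n] x ∈ K := by
  filter_upwards [
    ae_eventually_window_hitting_map_general hf.toMeasurePreserving hK.nullMeasurableSet hε,
    ae_exists_iterate_mem_of_ergodic hf hK.nullMeasurableSet hKpos.ne'] with x hwindow hx
    using eventually_atTop.1 (hwindow hx)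
end
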